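/- arXiv:2209.11443 — 2 statements merged into one kernel-verified Lean document; each statement's English description precedes it below -/
import Mathlib

section
/- Let n ≥ 1 be an integer and N = p₁^{k₁}···p_r^{k_r} with p₁,…,p_r distinct primes and kᵢ ≥ 1. For every subset S ⊆ (ℤ/Nℤ)ⁿ one has |S| ≥ C_{N,n} · |ℙ(ℤ/Nℤ)^{n-1}|^{-1} · ∑_{u ∈ ℙ(ℤ/Nℤ)^{n-1}} ( max_{a ∈ (ℤ/Nℤ)ⁿ} |{a + t·u : t ∈ ℤ/Nℤ} ∩ S| )ⁿ, where C_{N,n} = ( ∏_{j=1}^{r-1} 1/(k_j·log(p_j) + 1) · ∏_{i=1}^{r} 1/(2(k_i + ⌈log_{p_i}(n)⌉)) )ⁿ and log denotes the natural logarithm. -/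
/-- A vector in `(ℤ/Nℤ)ⁿ` is primitive (i.e. belongs to a class in `ℙ(ℤ/Nℤ)^{n-1}`)
iff its coordinates generate the unit ideal, equivalently for every prime power factor
`pᵢ^{kᵢ}` of `N`, the reduction mod `pᵢ^{kᵢ}` has a unit coordinate. -/
def IsPrimitiveVec {N n : ℕ} (u : Fin n → ZMod N) : Prop :=
  ∃ v : Fin n → ZMod N, ∑ i, v i * u i = 1

/-- `P` is a fixed set of representatives for the projective space `ℙ(ℤ/Nℤ)^{n-1}`:
each member is primitive and every primitive vector is a unit multiple of a unique member. -/
def IsProjRepSet (N n : ℕ) [NeZero N] (P : Finset (Fin n → ZMod N)) : Prop :=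
  (∀ u ∈ P, IsPrimitiveVec u) ∧
  ∀ u : Fin n → ZMod N, IsPrimitiveVec u →
    ∃! w, w ∈ P ∧ ∃ c : (ZMod N)ˣ, u = (c : ZMod N) • w

/-- The line `{a + t·u : t ∈ ℤ/Nℤ}` in `(ℤ/Nℤ)ⁿ`, as a finite set. -/
def lineF {N n : ℕ} [NeZero N] (a u : Fin n → ZMod N) : Finset (Fin n → ZMod N) :=
  Finset.image (fun t : ZMod N => a + t • u) Finset.univ

open Classical in
noncomputable def primSet (n : ℕ) (R : Type) [CommRing R] [Fintype R] : Finset (Fin n → R) :=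
  Finset.univ.filter (fun u => ∃ v : Fin n → R, ∑ i, v i * u i = 1)

open Classical in
noncomputable def tau {n : ℕ} {R : Type} [CommRing R] [Fintype R]
    (S : Finset (Fin n → R)) (u : Fin n → R) : ℕ :=
  Finset.univ.sup fun a : Fin n → R => (Finset.univ.filter fun t : R => a + t • u ∈ S).card

def KB (n : ℕ) (R : Type) [CommRing R] [Fintype R] (C : ℝ) : Prop :=
  ∀ S : Finset (Fin n → R), C * ∑ u ∈ primSet n R, (tau S u : ℝ) ^ n ≤
    ((primSet n R).card : ℝ) * S.card

open Classical in
lemma le_tau {n : ℕ} {R : Type} [CommRing R] [Fintype R]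
    (S : Finset (Fin n → R)) (u a : Fin n → R) :
    (Finset.univ.filter fun t : R => a + t • u ∈ S).card ≤ tau S u :=
  Finset.le_sup (f := fun a : Fin n → R => (Finset.univ.filter fun t : R => a + t • u ∈ S).card)
    (Finset.mem_univ a)

open Classical in
lemma exists_tau {n : ℕ} {R : Type} [CommRing R] [Fintype R]
    (S : Finset (Fin n → R)) (u : Fin n → R) :
    ∃ a : Fin n → R, tau S u = (Finset.univ.filter fun t : R => a + t • u ∈ S).card := by
  obtain ⟨a, -, h⟩ := Finset.exists_mem_eq_sup Finset.univ Finset.univ_nonempty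
    (fun a : Fin n → R => (Finset.univ.filter fun t : R => a + t • u ∈ S).card)
  exact ⟨a, h⟩

lemma tau_le {n : ℕ} {R : Type} [CommRing R] [Fintype R]
    (S : Finset (Fin n → R)) (u : Fin n → R) : tau S u ≤ Fintype.card R := by
  obtain ⟨a, h⟩ := exists_tau S u
  rw [h]; exact Finset.card_le_univ _

lemma tau_mono {n : ℕ} {R : Type} [CommRing R] [Fintype R]
    {S T : Finset (Fin n → R)} (h : S ⊆ T) (u : Fin n → R) : tau S u ≤ tau T u := by
  classical
  obtain ⟨a, h'⟩ := exists_tau S u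
  rw [h']
  refine le_trans (Finset.card_le_card ?_) (le_tau T u a)
  intro t
  simp only [Finset.mem_filter, Finset.mem_univ, true_and]
  exact fun x => h x

/-- pairing of vectors -/
def prv {n : ℕ} {R0 R1 : Type} (x : Fin n → R0) (y : Fin n → R1) : Fin n → R0 × R1 :=
  fun i => (x i, y i)

lemma sum_prv {n : ℕ} {R0 R1 : Type} [Fintype R0] [Fintype R1] {M : Type} [AddCommMonoid M]
    (F : (Fin n → R0 × R1) → M) :
    ∑ z, F z = ∑ x : Fin n → R0, ∑ y : Fin n → R1, F (prv x y) := by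
  rw [← Fintype.sum_prod_type']
  refine Fintype.sum_equiv (Equiv.arrowProdEquivProdArrow (Fin n) (fun _ => R0) (fun _ => R1)) _ _ ?_
  intro z
  rfl

open Classical in
lemma prim_prv {n : ℕ} {R0 R1 : Type} [CommRing R0] [Fintype R0] [CommRing R1] [Fintype R1]
    (x : Fin n → R0) (y : Fin n → R1) :
    prv x y ∈ primSet n (R0 × R1) ↔ x ∈ primSet n R0 ∧ y ∈ primSet n R1 := by
  simp only [primSet, Finset.mem_filter, Finset.mem_univ, true_and]
  constructor
  · rintro ⟨v, hv⟩
    refine ⟨⟨fun i => (v i).1, ?_⟩, ⟨fun i => (v i).2, ?_⟩⟩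
    · have := congrArg Prod.fst hv
      simpa [Prod.fst_sum, prv] using this
    · have := congrArg Prod.snd hv
      simpa [Prod.snd_sum, prv] using this
  · rintro ⟨⟨v, hv⟩, ⟨w, hw⟩⟩
    refine ⟨prv v w, ?_⟩
    ext
    · simpa [Prod.fst_sum, prv] using hv
    · simpa [Prod.snd_sum, prv] using hw

lemma sum_prim_prv {n : ℕ} {R0 R1 : Type} [CommRing R0] [Fintype R0] [CommRing R1] [Fintype R1]
    (F : (Fin n → R0 × R1) → ℝ) :
    ∑ z ∈ primSet n (R0 × R1), F z =
      ∑ x ∈ primSet n R0, ∑ y ∈ primSet n R1, F (prv x y) := by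
  classical
  have h1 : ∀ (T : Type) [Fintype T] (s : Finset T) (G : T → ℝ),
      ∑ z ∈ s, G z = ∑ z, if z ∈ s then G z else 0 := by
    intro T _ s G
    simp
  rw [h1, sum_prv, h1 _ (primSet n R0)]
  refine Finset.sum_congr rfl fun x _ => ?_
  rw [h1]
  by_cases hx : x ∈ primSet n R0
  · simp [prim_prv, hx]
  · simp [prim_prv, hx]

lemma nat_layer (q m : ℕ) (h : m ≤ q) (g : ℕ → ℝ) (h0 : g 0 = 0) :
    g m = ∑ i ∈ Finset.range q, (g (i+1) - g i) * (if i + 1 ≤ m then 1 else 0) := by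
  have h1 : ∑ i ∈ Finset.range q, (g (i+1) - g i) * (if i + 1 ≤ m then (1:ℝ) else 0)
      = ∑ i ∈ Finset.range m, (g (i+1) - g i) := by
    simp only [mul_ite, mul_one, mul_zero]
    rw [← Finset.sum_filter]
    congr 1
    ext i
    simp
    omega
  rw [h1, Finset.sum_range_sub, h0, sub_zero]

lemma layer_max (q n : ℕ) (hn : n ≠ 0) (m : ℕ → ℝ) (hm : ∀ i, 0 ≤ m i) (ha : Antitone m) (i : ℕ) (hi : i < q) :
    (((i:ℝ) + 1) * m i) ^ n ≤
      ∑ j ∈ Finset.range q, (((j:ℝ)+1)^n - (j:ℝ)^n) * m j ^ n := by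
  have h1 : ∑ j ∈ Finset.range (i+1), (((j:ℝ)+1)^n - (j:ℝ)^n) * m j ^ n ≤
     ∑ j ∈ Finset.range q, (((j:ℝ)+1)^n - (j:ℝ)^n) * m j ^ n := by
    refine Finset.sum_le_sum_of_subset_of_nonneg ?_ ?_
    · intro x; simp; omega
    · intro j _ _
      refine mul_nonneg (sub_nonneg.2 ?_) (pow_nonneg (hm j) n)
      gcongr; linarith
  have h2 : ∑ j ∈ Finset.range (i+1), (((j:ℝ)+1)^n - (j:ℝ)^n) * m i ^ n ≤
      ∑ j ∈ Finset.range (i+1), (((j:ℝ)+1)^n - (j:ℝ)^n) * m j ^ n := by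
    refine Finset.sum_le_sum fun j hj => ?_
    refine mul_le_mul_of_nonneg_left ?_ (sub_nonneg.2 ?_)
    · exact pow_le_pow_left₀ (hm i) (ha (by simp at hj; omega)) n
    · gcongr; linarith
  have h3 : ∑ j ∈ Finset.range (i+1), (((j:ℝ)+1)^n - (j:ℝ)^n) = ((i:ℝ)+1)^n := by
    have := Finset.sum_range_sub (fun j : ℕ => (j:ℝ)^n) (i+1)
    push_cast at this
    rw [this]; simp [hn]
  rw [← Finset.sum_mul, h3] at h2
  rw [mul_pow]; linarith

open Classical in
lemma KB_prod {n : ℕ} (hn : n ≠ 0) {R0 R1 : Type} [CommRing R0] [Fintype R0] [CommRing R1]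
    [Fintype R1] {C0 C1 H : ℝ} (hC0 : 0 ≤ C0) (hC1 : 0 ≤ C1)
    (h0 : KB n R0 C0) (h1 : KB n R1 C1) (hH0 : 0 < H)
    (hH : ∑ i ∈ Finset.range (Fintype.card R0), (1:ℝ) / ((i:ℝ) + 1) ≤ H) :
    KB n (R0 × R1) (C0 * C1 * (1 / H) ^ n) := by
  intro S
  set q := Fintype.card R0 with hq
  let Sy : (Fin n → R1) → Finset (Fin n → R0) := fun y => Finset.univ.filter (fun x => prv x y ∈ S)
  let f : (Fin n → R0) → (Fin n → R1) → ℕ := fun u y => tau (Sy y) u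
  let Y : (Fin n → R0) → ℕ → Finset (Fin n → R1) := fun u i =>
    Finset.univ.filter (fun y => i + 1 ≤ f u y)
  have hfq : ∀ u y, f u y ≤ q := fun u y => tau_le _ _
  have hS : (S.card : ℝ) = ∑ y, ((Sy y).card : ℝ) := by
    have e1 : S.card = ∑ z, if z ∈ S then 1 else 0 := by simp
    rw [e1, sum_prv, Finset.sum_comm, Nat.cast_sum]
    refine Finset.sum_congr rfl fun y _ => ?_
    simp [Sy]
  have hcard : ((primSet n (R0 × R1)).card : ℝ) = (primSet n R0).card * (primSet n R1).card := by
    have := sum_prim_prv (n := n) (R0 := R0) (R1 := R1) (fun _ => 1)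
    simpa using this
  have hYanti : ∀ u, ∀ i j, i ≤ j → Y u j ⊆ Y u i := by
    intro u i j hij y
    simp only [Y, Finset.mem_filter, Finset.mem_univ, true_and]
    omega
  -- tau bound
  have key : ∀ u0 u1, ((1 / H) * (tau S (prv u0 u1) : ℝ)) ^ n ≤
      ∑ j ∈ Finset.range q, (((j:ℝ)+1)^n - (j:ℝ)^n) * (tau (Y u0 j) u1 : ℝ) ^ n := by
    intro u0 u1
    set B := ∑ j ∈ Finset.range q, (((j:ℝ)+1)^n - (j:ℝ)^n) * (tau (Y u0 j) u1 : ℝ) ^ n with hB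
    have hmax := layer_max q n hn (fun j => (tau (Y u0 j) u1 : ℝ)) (fun _ => Nat.cast_nonneg _)
      (fun i j hij => Nat.cast_le.2 (tau_mono (hYanti u0 i j hij) u1))
    obtain ⟨a, ha⟩ := exists_tau S (prv u0 u1)
    have e1 : tau S (prv u0 u1) ≤ ∑ t1 : R1, f u0 ((fun i => (a i).2) + t1 • u1) := by
      rw [ha, Finset.card_filter, Fintype.sum_prod_type, Finset.sum_comm]
      refine Finset.sum_le_sum fun t1 _ => ?_
      refine le_trans ?_ (le_tau _ u0 (fun i => (a i).1))
      rw [Finset.card_filter]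
      refine Finset.sum_le_sum fun t0 _ => ?_
      have : a + (t0, t1) • prv u0 u1 =
        prv ((fun i => (a i).1) + t0 • u0) ((fun i => (a i).2) + t1 • u1) := by
        ext i <;> simp [prv]
      rw [this]
      simp only [Sy, Finset.mem_filter, Finset.mem_univ, true_and]
      apply le_of_eq
      congr
    have e2 : ∑ t1 : R1, (f u0 ((fun i => (a i).2) + t1 • u1) : ℝ) ≤
        ∑ j ∈ Finset.range q, (tau (Y u0 j) u1 : ℝ) := by
      have : ∀ t1 : R1, (f u0 ((fun i => (a i).2) + t1 • u1) : ℝ) = ∑ j ∈ Finset.range q,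
          if (fun i => (a i).2) + t1 • u1 ∈ Y u0 j then (1:ℝ) else 0 := by
        intro t1
        rw [nat_layer q _ (hfq _ _) (fun j => (j:ℝ)) (by simp)]
        refine Finset.sum_congr rfl fun j _ => ?_
        simp [Y]
      simp_rw [this]
      rw [Finset.sum_comm]
      refine Finset.sum_le_sum fun j _ => ?_
      have := le_tau (Y u0 j) u1 (fun i => (a i).2)
      rw [Finset.card_filter] at this
      exact_mod_cast this
    -- max over j
    have e3 : ∃ M : ℝ, 0 ≤ M ∧ M ^ n ≤ B ∧
        ∀ j ∈ Finset.range q, ((j:ℝ)+1) * (tau (Y u0 j) u1 : ℝ) ≤ M := by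
      by_cases hq0 : (Finset.range q).Nonempty
      · obtain ⟨i, hi, him⟩ := Finset.exists_max_image (Finset.range q)
          (fun j : ℕ => ((j:ℝ)+1) * (tau (Y u0 j) u1 : ℝ)) hq0
        exact ⟨_, by positivity, hmax i (Finset.mem_range.1 hi), him⟩
      · refine ⟨0, le_rfl, ?_, ?_⟩
        · rw [Finset.not_nonempty_iff_eq_empty] at hq0
          rw [hB, hq0]; simp [hn]
        · intro j hj; exact absurd ⟨j, hj⟩ hq0
    obtain ⟨M, hM0, hMB, hM⟩ := e3
    have e4 : ∑ j ∈ Finset.range q, (tau (Y u0 j) u1 : ℝ) ≤ H * M := by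
      calc _ ≤ ∑ j ∈ Finset.range q, (1:ℝ) / ((j:ℝ) + 1) * M := by
            refine Finset.sum_le_sum fun j hj => ?_
            have hj1 : (0:ℝ) < (j:ℝ) + 1 := by positivity
            rw [one_div_mul_eq_div, le_div_iff₀ hj1, mul_comm]
            exact hM j hj
        _ ≤ _ := by
            rw [← Finset.sum_mul]
            exact mul_le_mul_of_nonneg_right hH hM0
    have e5 : (tau S (prv u0 u1) : ℝ) ≤ H * M := by
      refine le_trans ?_ (e2.trans e4)
      exact_mod_cast e1
    refine le_trans (pow_le_pow_left₀ (by positivity) ?_ n) hMB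
    rw [one_div_mul_eq_div, div_le_iff₀ hH0]
    linarith
  have step1 : ∀ u0, C1 * ∑ u1 ∈ primSet n R1, ∑ j ∈ Finset.range q,
      (((j:ℝ)+1)^n - (j:ℝ)^n) * (tau (Y u0 j) u1 : ℝ) ^ n ≤
      (primSet n R1).card * ∑ y, (f u0 y : ℝ) ^ n := by
    intro u0
    have : ∑ y, (f u0 y : ℝ) ^ n = ∑ j ∈ Finset.range q, (((j:ℝ)+1)^n - (j:ℝ)^n) * (Y u0 j).card := by
      have : ∀ y, (f u0 y : ℝ) ^ n = ∑ j ∈ Finset.range q, (((j:ℝ)+1)^n - (j:ℝ)^n) *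
          if y ∈ Y u0 j then (1:ℝ) else 0 := by
        intro y
        rw [nat_layer q _ (hfq u0 y) (fun j => (j:ℝ)^n) (by simp [hn])]
        refine Finset.sum_congr rfl fun j _ => ?_
        simp [Y]
      simp_rw [this]
      rw [Finset.sum_comm]
      refine Finset.sum_congr rfl fun j _ => ?_
      rw [← Finset.mul_sum]
      simp
    rw [this, Finset.sum_comm, Finset.mul_sum, Finset.mul_sum]
    refine Finset.sum_le_sum fun j _ => ?_
    have hj : 0 ≤ ((j:ℝ)+1)^n - (j:ℝ)^n := sub_nonneg.2 (by gcongr; linarith)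
    have := mul_le_mul_of_nonneg_left (h1 (Y u0 j)) hj
    rw [← Finset.mul_sum]
    linarith
  rw [sum_prim_prv, hcard, hS]
  calc C0 * C1 * (1 / H) ^ n * ∑ u0 ∈ primSet n R0, ∑ u1 ∈ primSet n R1, (tau S (prv u0 u1) : ℝ) ^ n
      = C0 * ∑ u0 ∈ primSet n R0, (C1 * ∑ u1 ∈ primSet n R1, ((1 / H) * (tau S (prv u0 u1) : ℝ)) ^ n) := by
        simp_rw [mul_pow, Finset.mul_sum]
        refine Finset.sum_congr rfl fun _ _ => Finset.sum_congr rfl fun _ _ => ?_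
        ring
    _ ≤ C0 * ∑ u0 ∈ primSet n R0, ((primSet n R1).card * ∑ y, (f u0 y : ℝ) ^ n) := by
        refine mul_le_mul_of_nonneg_left (Finset.sum_le_sum fun u0 _ => ?_) hC0
        refine le_trans (mul_le_mul_of_nonneg_left (Finset.sum_le_sum fun u1 _ => key u0 u1) hC1) ?_
        exact step1 u0
    _ = (primSet n R1).card * ∑ y, (C0 * ∑ u0 ∈ primSet n R0, (f u0 y : ℝ) ^ n) := by
        rw [← Finset.mul_sum, ← Finset.mul_sum, Finset.sum_comm]; ring
    _ ≤ (primSet n R1).card * ∑ y, ((primSet n R0).card * ((Sy y).card : ℝ)) := by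
        refine mul_le_mul_of_nonneg_left (Finset.sum_le_sum fun y _ => ?_) (by positivity)
        exact h0 (Sy y)
    _ = _ := by rw [← Finset.mul_sum]; ring

lemma KB_equiv {n : ℕ} {R R' : Type} [CommRing R] [Fintype R] [CommRing R'] [Fintype R']
    (e : R ≃+* R') {C : ℝ} (h : KB n R C) : KB n R' C := by
  classical
  intro S
  let E : (Fin n → R) ≃ (Fin n → R') := Equiv.arrowCongr (Equiv.refl _) e.toEquiv
  have hE : ∀ x i, E x i = e (x i) := fun x i => rfl
  have hp : ∀ x, x ∈ primSet n R ↔ E x ∈ primSet n R' := by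
    intro x
    simp only [primSet, Finset.mem_filter, Finset.mem_univ, true_and]
    constructor
    · rintro ⟨v, hv⟩
      refine ⟨E v, ?_⟩
      have := congrArg e hv
      simpa [hE] using this
    · rintro ⟨v, hv⟩
      refine ⟨E.symm v, ?_⟩
      apply e.injective
      have : ∀ i, e (E.symm v i) = v i := fun i => by rw [← hE, Equiv.apply_symm_apply]
      simpa [hE, this] using hv
  let T : Finset (Fin n → R) := S.map E.symm.toEmbedding
  have hT : ∀ x, x ∈ T ↔ E x ∈ S := by
    intro x
    simp [T]
  have htau : ∀ u, tau S (E u) ≤ tau T u := by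
    intro u
    obtain ⟨a, ha⟩ := exists_tau S (E u)
    rw [ha]
    refine le_trans ?_ (le_tau T u (E.symm a))
    refine Finset.card_le_card_of_injOn e.symm ?_ (e.symm.injective.injOn)
    intro t
    simp only [Finset.coe_filter, Finset.mem_univ, true_and, Set.mem_ofPred_eq, hT]
    intro ht
    convert ht using 1
    ext i
    have : ∀ i, e (E.symm a i) = a i := fun i => by rw [← hE, Equiv.apply_symm_apply]
    simp [hE, this]
  have hsum : ∀ F : (Fin n → R') → ℝ, ∑ u ∈ primSet n R', F u = ∑ u ∈ primSet n R, F (E u) := by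
    intro F
    refine (Finset.sum_equiv E hp ?_).symm
    intros; rfl
  have hc : ((primSet n R').card : ℝ) = (primSet n R).card := by
    simpa using hsum (fun _ => 1)
  have hTc : T.card = S.card := by simp [T]
  by_cases hC : 0 ≤ C
  · rw [hsum, hc, ← hTc]
    refine le_trans (mul_le_mul_of_nonneg_left (Finset.sum_le_sum fun u _ => ?_) hC) (h T)
    exact pow_le_pow_left₀ (by positivity) (by exact_mod_cast htau u) n
  · refine le_trans (mul_nonpos_of_nonpos_of_nonneg (by linarith) ?_) (by positivity)
    exact Finset.sum_nonneg fun _ _ => by positivity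
open Polynomial in
lemma ntd_pow_sub_one (p : ℕ) [Fact p.Prime] (s : ℕ) (hs : s ≠ 0) :
    ((1 + X : (ZMod p)[X]) ^ s - 1).coeff (p ^ (padicValNat p s)) ≠ 0 := by
  obtain ⟨s', hs'⟩ : p ^ (padicValNat p s) ∣ s := pow_padicValNat_dvd
  set v := padicValNat p s with hv
  have hp : p.Prime := Fact.out
  have hq : 0 < p ^ v := pow_pos hp.pos v
  have hnd : ¬ p ∣ s' := by
    rintro ⟨t, rfl⟩
    have : p ^ (v + 1) ∣ s := ⟨t, by rw [hs']; ring⟩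
    rw [padicValNat_dvd_iff_le hs] at this
    omega
  have h1 : (1 + X : (ZMod p)[X]) ^ s = expand (ZMod p) (p ^ v) ((1 + X) ^ s') := by
    rw [hs', pow_mul, add_pow_char_pow]
    simp
  have h2 : ((1 + X : (ZMod p)[X]) ^ s).coeff (p ^ v) = (s' : ZMod p) := by
    have := coeff_expand_mul hq ((1 + X : (ZMod p)[X]) ^ s') 1
    rw [one_mul] at this
    rw [h1, this, coeff_one_add_X_pow]
    simp
  rw [coeff_sub, h2, coeff_one, if_neg hq.ne', sub_zero]
  rwa [Ne, ZMod.natCast_eq_zero_iff]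

lemma sum_val_le (p : ℕ) (hp : p.Prime) (K j : ℕ) (hj : j < p ^ K) :
    ∑ s ∈ Finset.range j, p ^ (padicValNat p (s+1)) ≤ K * j := by
  have := Fact.mk hp
  have h1 : ∀ s ∈ Finset.range j, p ^ (padicValNat p (s+1)) ≤
      ∑ i ∈ Finset.range K, if p ^ i ∣ s + 1 then p ^ i else 0 := by
    intro s hs
    have hs := Finset.mem_range.1 hs
    have hd : p ^ (padicValNat p (s+1)) ∣ s + 1 := pow_padicValNat_dvd
    have hlt : padicValNat p (s+1) < K := by
      have := Nat.le_of_dvd (by omega) hd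
      exact (Nat.pow_lt_pow_iff_right hp.one_lt).1 (by omega)
    have := Finset.single_le_sum (f := fun i => if p ^ i ∣ s + 1 then p ^ i else 0)
      (fun i _ => Nat.zero_le _) (Finset.mem_range.2 hlt)
    simpa [hd] using this
  refine (Finset.sum_le_sum h1).trans ?_
  rw [Finset.sum_comm]
  have h2 : ∀ i ∈ Finset.range K, (∑ s ∈ Finset.range j, if p ^ i ∣ s + 1 then p ^ i else 0) ≤ j := by
    intro i _
    rw [← Finset.sum_filter, Finset.sum_const, smul_eq_mul]
    have : (Finset.filter (fun s => p ^ i ∣ s + 1) (Finset.range j)).card = j / p ^ i := by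
      rw [← Nat.card_multiples]
    rw [this]
    exact Nat.div_mul_le_self _ _
  refine (Finset.sum_le_sum h2).trans ?_
  simp

open Polynomial in
lemma Qval (p : ℕ) [Fact p.Prime] (K j : ℕ) (hj : j < p ^ K) :
    (∏ s ∈ Finset.range j, ((1 + X : (ZMod p)[X]) ^ j - (1 + X) ^ s)) ≠ 0 ∧
    (∏ s ∈ Finset.range j, ((1 + X : (ZMod p)[X]) ^ j - (1 + X) ^ s)).natTrailingDegree ≤ K * j := by
  have hp : p.Prime := Fact.out
  have h1X : (1 + X : (ZMod p)[X]).coeff 0 = 1 := by simp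
  have key : ∀ s ∈ Finset.range j, ((1 + X : (ZMod p)[X]) ^ j - (1 + X) ^ s) ≠ 0 ∧
      ((1 + X : (ZMod p)[X]) ^ j - (1 + X) ^ s).natTrailingDegree ≤ p ^ (padicValNat p (j - s)) := by
    intro s hs
    have hs := Finset.mem_range.1 hs
    have e : (1 + X : (ZMod p)[X]) ^ j - (1 + X) ^ s = (1 + X) ^ s * ((1 + X) ^ (j - s) - 1) := by
      rw [mul_sub, ← pow_add]; congr 2 <;> [congr 1; simp]; omega
    have hne : (1 + X : (ZMod p)[X]) ^ s ≠ 0 := by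
      intro h
      have := congrArg (fun q => coeff q 0) h
      simp [coeff_zero_eq_eval_zero] at this
    have hc := ntd_pow_sub_one p (j - s) (by omega)
    have hne2 : (1 + X : (ZMod p)[X]) ^ (j - s) - 1 ≠ 0 := by
      intro h; rw [h] at hc; simp at hc
    refine ⟨by rw [e]; exact mul_ne_zero hne hne2, ?_⟩
    rw [e, natTrailingDegree_mul hne hne2]
    have : ((1 + X : (ZMod p)[X]) ^ s).natTrailingDegree ≤ 0 := by
      apply natTrailingDegree_le_of_ne_zero
      simp [coeff_zero_eq_eval_zero]
    have := natTrailingDegree_le_of_ne_zero hc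
    omega
  have gen : ∀ t : Finset ℕ, t ⊆ Finset.range j →
    (∏ s ∈ t, ((1 + X : (ZMod p)[X]) ^ j - (1 + X) ^ s)) ≠ 0 ∧
    (∏ s ∈ t, ((1 + X : (ZMod p)[X]) ^ j - (1 + X) ^ s)).natTrailingDegree ≤
      ∑ s ∈ t, p ^ (padicValNat p (j - s)) := by
    intro t
    induction t using Finset.induction_on with
    | empty => intro _; simp
    | insert a t ha ih =>
      intro hst
      obtain ⟨i1, i2⟩ := ih ((Finset.subset_insert _ _).trans hst)
      obtain ⟨k1, k2⟩ := key a (hst (Finset.mem_insert_self _ _))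
      rw [Finset.prod_insert ha, Finset.sum_insert ha]
      refine ⟨mul_ne_zero k1 i1, ?_⟩
      rw [natTrailingDegree_mul k1 i1]
      omega
  obtain ⟨g1, g2⟩ := gen _ subset_rfl
  refine ⟨g1, g2.trans (le_trans (le_of_eq ?_) (sum_val_le p hp K j hj))⟩
  rw [← Finset.sum_range_reflect]
  refine Finset.sum_congr rfl fun s hs => ?_
  have := Finset.mem_range.1 hs
  congr 2
  omega

open Polynomial in
lemma indep_all (p : ℕ) [Fact p.Prime] (n K m : ℕ) (J : Finset (Fin n → ℕ))
    (hJ : ∀ e ∈ J, ∀ i, e i < p ^ K) (hJm : ∀ e ∈ J, K * ∑ i, e i < m)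
    (c : (Fin n → ℕ) → ZMod p)
    (h : ∀ u : Fin n → ℕ, (X : (ZMod p)[X]) ^ m ∣ ∑ e ∈ J, C (c e) * (1 + X) ^ (∑ i, u i * e i)) :
    ∀ e ∈ J, c e = 0 := by
  classical
  by_contra hcon
  push Not at hcon
  obtain ⟨e0, he0, hc0⟩ := hcon
  obtain ⟨es, hes⟩ := (J.filter (fun e => c e ≠ 0)).exists_maximal ⟨e0, by simp [he0, hc0]⟩
  have hesJ : es ∈ J ∧ c es ≠ 0 := by simpa using hes.1
  let Q : ℕ → (ZMod p)[X][X] := fun j => ∏ s ∈ Finset.range j, (X - C ((1 + X) ^ s))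
  have hQev : ∀ j y, (Q j).eval y = ∏ s ∈ Finset.range j, (y - (1 + X) ^ s) := by
    intro j y; simp [Q, eval_prod]
  have h1 : ∑ e ∈ J, C (c e) * ∏ i, (Q (es i)).eval ((1 + X) ^ (e i)) =
      C (c es) * ∏ i, (Q (es i)).eval ((1 + X) ^ (es i)) := by
    refine Finset.sum_eq_single es ?_ (fun h => absurd hesJ.1 h)
    intro e he hne
    by_cases hce : c e = 0
    · simp [hce]
    have : ∃ i, e i < es i := by
      by_contra hno
      push Not at hno
      exact hne (le_antisymm (hes.2 (by simp [he, hce]) hno) hno)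
    obtain ⟨i, hi⟩ := this
    rw [Finset.prod_eq_zero (Finset.mem_univ i), mul_zero]
    rw [hQev]
    exact Finset.prod_eq_zero (Finset.mem_range.2 hi) (by simp)
  have h2 : (X : (ZMod p)[X]) ^ m ∣ ∑ e ∈ J, C (c e) * ∏ i, (Q (es i)).eval ((1 + X) ^ (e i)) := by
    have : ∑ e ∈ J, C (c e) * ∏ i, (Q (es i)).eval ((1 + X) ^ (e i)) =
      ∑ u ∈ Fintype.piFinset (fun i => Finset.range ((Q (es i)).natDegree + 1)),
        (∏ i, (Q (es i)).coeff (u i)) * ∑ e ∈ J, C (c e) * (1 + X) ^ (∑ i, u i * e i) := by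
      simp_rw [Finset.mul_sum]
      rw [Finset.sum_comm]
      refine Finset.sum_congr rfl fun e _ => ?_
      simp_rw [eval_eq_sum_range]
      rw [Finset.prod_univ_sum, Finset.mul_sum]
      refine Finset.sum_congr rfl fun u _ => ?_
      rw [Finset.prod_mul_distrib, ← Finset.prod_pow_eq_pow_sum]
      simp_rw [← pow_mul, mul_comm (e _)]
      ring
    rw [this]
    exact Finset.dvd_sum fun u _ => Dvd.dvd.mul_left (h u) _
  rw [h1] at h2
  have hprod : ∀ t : Finset (Fin n), (∏ i ∈ t, (Q (es i)).eval ((1 + X) ^ (es i))) ≠ 0 ∧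
    (∏ i ∈ t, (Q (es i)).eval ((1 + X) ^ (es i))).natTrailingDegree ≤ ∑ i ∈ t, K * es i := by
    intro t
    induction t using Finset.induction_on with
    | empty => simp
    | insert a t ha ih =>
      obtain ⟨i1, i2⟩ := ih
      obtain ⟨k1, k2⟩ := Qval p K (es a) (hJ es hesJ.1 a)
      rw [← hQev] at k1 k2
      rw [Finset.prod_insert ha, Finset.sum_insert ha]
      refine ⟨mul_ne_zero k1 i1, ?_⟩
      rw [natTrailingDegree_mul k1 i1]
      omega
  obtain ⟨g1, g2⟩ := hprod Finset.univ
  have hC : C (c es) ≠ 0 := by simpa using hesJ.2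
  have h3 := hJm es hesJ.1
  rw [Finset.mul_sum] at h3
  rw [X_pow_dvd_iff] at h2
  have h4 := h2 _ (lt_of_le_of_lt g2 h3)
  rw [coeff_C_mul] at h4
  have h5 : (∏ i, (Q (es i)).eval ((1 + X) ^ (es i))).trailingCoeff ≠ 0 :=
    trailingCoeff_nonzero_iff_nonzero.2 g1
  rcases mul_eq_zero.1 h4 with h | h
  · exact hesJ.2 h
  · exact h5 h

open Polynomial in
lemma prim_to_all (p : ℕ) [Fact p.Prime] (n m : ℕ) (hn : n ≠ 0) (J : Finset (Fin n → ℕ))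
    (c : (Fin n → ℕ) → ZMod p)
    (h : ∀ u : Fin n → ℕ, (∃ i, ¬ p ∣ u i) →
      (X : (ZMod p)[X]) ^ m ∣ ∑ e ∈ J, C (c e) * (1 + X) ^ (∑ i, u i * e i)) :
    ∀ u : Fin n → ℕ, 
      (X : (ZMod p)[X]) ^ m ∣ ∑ e ∈ J, C (c e) * (1 + X) ^ (∑ i, u i * e i) := by
  have hp : p.Prime := Fact.out
  intro u
  induction hs : ∑ i, u i using Nat.strong_induction_on generalizing u with
  | _ s ih =>
  by_cases hu : ∃ i, ¬ p ∣ u i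
  · exact h u hu
  push Not at hu
  by_cases hu0 : u = 0
  · have h1 := h 1 ⟨⟨0, Nat.pos_of_ne_zero hn⟩, by simpa using hp.one_lt.ne'⟩
    rcases Nat.eq_zero_or_pos m with rfl | hm
    · simp
    have h2 := (X_pow_dvd_iff.1 h1) 0 hm
    rw [coeff_zero_eq_eval_zero, eval_finsetSum] at h2
    have : ∑ e ∈ J, C (c e) * (1 + X : (ZMod p)[X]) ^ (∑ i, u i * e i) = 0 := by
      subst hu0
      simp at h2 ⊢
      rw [← map_sum, h2, map_zero]
    rw [this]; exact dvd_zero _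
  choose v hv using hu
  obtain rfl : u = fun i => p * v i := funext hv
  have hv0 : v ≠ 0 := by rintro rfl; apply hu0; ext; simp
  have hlt : ∑ i, v i < s := by
    rw [← hs, ← Finset.mul_sum]
    have : 0 < ∑ i, v i := by
      rw [Nat.pos_iff_ne_zero]
      intro h; apply hv0; ext i; simpa using (Finset.sum_eq_zero_iff.1 h) i (Finset.mem_univ i)
    nlinarith [hp.two_le]
  have := ih _ hlt v rfl
  have h3 : ∑ e ∈ J, C (c e) * (1 + X : (ZMod p)[X]) ^ (∑ i, p * v i * e i) =
      expand (ZMod p) p (∑ e ∈ J, C (c e) * (1 + X : (ZMod p)[X]) ^ (∑ i, v i * e i)) := by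
    rw [map_sum]
    refine Finset.sum_congr rfl fun e _ => ?_
    have : ∑ i, p * v i * e i = p * ∑ i, v i * e i := by
      rw [Finset.mul_sum]; exact Finset.sum_congr rfl fun _ _ => by ring
    rw [this, pow_mul, add_pow_char]
    simp
  rw [h3]
  have h4 := map_dvd (expand (ZMod p) p) this
  refine dvd_trans ?_ h4
  rw [map_pow, expand_X]
  exact pow_dvd_pow_of_dvd (dvd_pow_self X hp.ne_zero) m

lemma choose_val (p : ℕ) [Fact p.Prime] (K a j : ℕ) (hj : j < p ^ K) :
    (((a : ZMod (p ^ K)).val.choose j : ℕ) : ZMod p) = ((a.choose j : ℕ) : ZMod p) := by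
  open Polynomial in
  have key : ∀ q r : ℕ, (((p ^ K * q + r).choose j : ℕ) : ZMod p) = ((r.choose j : ℕ) : ZMod p) := by
    intro q r
    have h1 : (X : (ZMod p)[X]) ^ (p ^ K) ∣ (1 + X) ^ (p ^ K * q + r) - (1 + X) ^ r := by
      rw [pow_add, pow_mul, add_pow_char_pow, ← sub_one_mul]
      refine Dvd.dvd.mul_right ?_ _
      have := sub_dvd_pow_sub_pow ((1 : (ZMod p)[X]) ^ (p ^ K) + X ^ (p ^ K)) 1 q
      simpa using this
    have h2 := (X_pow_dvd_iff.1 h1) j hj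
    rw [coeff_sub, coeff_one_add_X_pow, coeff_one_add_X_pow, sub_eq_zero] at h2
    exact h2
  rw [ZMod.val_natCast]
  conv_rhs => rw [← Nat.div_add_mod a (p ^ K)]
  rw [key]

/-- the basic functionals -/
def phi (p K n : ℕ) (b : (Fin n → ZMod (p ^ K)) × ℕ) : (Fin n → ZMod (p ^ K)) → ZMod p :=
  fun e => (((b.1 ⬝ᵥ e).val.choose b.2 : ℕ) : ZMod p)

lemma prim_iff (p : ℕ) [Fact p.Prime] (K n : ℕ) (hK : 1 ≤ K) (u : Fin n → ZMod (p ^ K)) :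
    u ∈ primSet n (ZMod (p ^ K)) ↔ ∃ i, ¬ p ∣ (u i).val := by
  have hp : p.Prime := Fact.out
  have hunit : ∀ a : ℕ, IsUnit (a : ZMod (p ^ K)) ↔ ¬ p ∣ a := by
    intro a
    rw [ZMod.isUnit_iff_coprime, Nat.coprime_pow_right_iff (by omega), Nat.coprime_comm,
      hp.coprime_iff_not_dvd]
  simp only [primSet, Finset.mem_filter, Finset.mem_univ, true_and]
  constructor
  · rintro ⟨v, hv⟩
    by_contra hcon
    push Not at hcon
    choose w hw using hcon
    have : ((p : ℕ) : ZMod (p ^ K)) * ∑ i, v i * w i = 1 := by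
      rw [← hv, Finset.mul_sum]
      refine Finset.sum_congr rfl fun i _ => ?_
      have : u i = ((p * w i : ℕ) : ZMod (p ^ K)) := by rw [← hw, ZMod.natCast_zmod_val]
      rw [this]; push_cast; ring
    exact (hunit p).1 (IsUnit.of_mul_eq_one _ this) dvd_rfl
  · rintro ⟨i, hi⟩
    have h := (hunit _).2 hi
    rw [ZMod.natCast_zmod_val] at h
    obtain ⟨x, hx⟩ := h.exists_left_inv
    classical
    refine ⟨Pi.single i x, ?_⟩
    rw [Finset.sum_eq_single i]
    · simpa using hx
    · intro j _ hj; simp [hj]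
    · simp

lemma finrank_ge (p : ℕ) [Fact p.Prime] (K n m : ℕ) (hK : 1 ≤ K) (hn : n ≠ 0) (hm : m ≤ p ^ K)
    (J : Finset (Fin n → ℕ))
    (hJ : ∀ e ∈ J, ∀ i, e i < p ^ K) (hJm : ∀ e ∈ J, K * ∑ i, e i < m) :
    J.card ≤ Module.finrank (ZMod p) (Submodule.span (ZMod p)
      (phi p K n '' {b | b.1 ∈ primSet n (ZMod (p ^ K)) ∧ b.2 < m})) := by
  classical
  set W := Submodule.span (ZMod p)
      (phi p K n '' {b | b.1 ∈ primSet n (ZMod (p ^ K)) ∧ b.2 < m}) with hW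
  let r : ((Fin n → ZMod (p ^ K)) → ZMod p) →ₗ[ZMod p] (J → ZMod p) :=
    LinearMap.funLeft (ZMod p) (ZMod p) (fun e : J => fun i => ((e : Fin n → ℕ) i : ZMod (p ^ K)))
  have htop : W.map r = ⊤ := by
    by_contra hne
    obtain ⟨f, hf0, hf⟩ := Submodule.exists_le_ker_of_lt_top _ (lt_top_iff_ne_top.2 hne)
    let c : (Fin n → ℕ) → ZMod p := fun e => if h : e ∈ J then f (Pi.single ⟨e, h⟩ 1) else 0
    have hc : ∀ g : (Fin n → ℕ) → ZMod p, f (fun e : J => g e) = ∑ e ∈ J, c e * g e := by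
      intro g
      rw [← Finset.sum_coe_sort J (fun e => c e * g e)]
      conv_lhs => rw [pi_eq_sum_univ' (fun e : J => g e)]
      rw [map_sum]
      refine Finset.sum_congr rfl fun e _ => ?_
      rw [map_smul]
      simp only [c, e.2, dif_pos, smul_eq_mul]
      rw [mul_comm]
    open Polynomial in
    have hdiv : ∀ u : Fin n → ℕ, (∃ i, ¬ p ∣ u i) →
      (X : (ZMod p)[X]) ^ m ∣ ∑ e ∈ J, C (c e) * (1 + X) ^ (∑ i, u i * e i) := by
      intro u hu
      rw [X_pow_dvd_iff]
      intro j hj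
      have h1 : phi p K n (fun i => (u i : ZMod (p ^ K)), j) ∈ W := by
        apply Submodule.subset_span
        refine ⟨_, ⟨?_, hj⟩, rfl⟩
        rw [prim_iff p K n hK]
        obtain ⟨i, hi⟩ := hu
        refine ⟨i, ?_⟩
        simp only [ZMod.val_natCast]
        rwa [Nat.dvd_mod_iff (dvd_pow_self p (by omega))]
      have h2 := hf (Submodule.mem_map_of_mem h1)
      rw [LinearMap.mem_ker] at h2
      have h3 := hc (fun e => (((∑ i, u i * e i).choose j : ℕ) : ZMod p))
      have h4 : r (phi p K n (fun i => (u i : ZMod (p ^ K)), j)) =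
          fun e : J => (((∑ i, u i * (e : Fin n → ℕ) i).choose j : ℕ) : ZMod p) := by
        ext e
        simp only [r, LinearMap.funLeft_apply, phi]
        rw [← choose_val p K (∑ i, u i * (e : Fin n → ℕ) i) j (lt_of_lt_of_le hj hm)]
        congr 3
        simp [dotProduct]
      rw [h4, h3] at h2
      rw [finsetSum_coeff, ← h2]
      refine Finset.sum_congr rfl fun e _ => ?_
      rw [coeff_C_mul, coeff_one_add_X_pow]
    have hall := indep_all p n K m J hJ hJm c (prim_to_all p n m hn J c hdiv)
    apply hf0
    ext e
    have := hall e e.2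
    simpa [c] using this
  have h1 : Module.finrank (ZMod p) (W.map r) = J.card := by
    rw [htop, finrank_top]; simp
  rw [← h1]
  exact Submodule.finrank_map_le r W

lemma chain_basis (p : ℕ) [Fact p.Prime] (K n : ℕ) (M : ℕ) :
    ∃ B : Finset ((Fin n → ZMod (p ^ K)) × ℕ),
      (∀ b ∈ B, b.1 ∈ primSet n (ZMod (p ^ K)) ∧ b.2 < M) ∧
      LinearIndepOn (ZMod p) (phi p K n) (B : Set _) ∧
      ∀ m ≤ M, Module.finrank (ZMod p) (Submodule.span (ZMod p)
        (phi p K n '' {b | b.1 ∈ primSet n (ZMod (p ^ K)) ∧ b.2 < m})) ≤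
        (B.filter (fun b => b.2 < m)).card := by
  classical
  induction M with
  | zero =>
    refine ⟨∅, by simp, by simp, ?_⟩
    intro m hm
    obtain rfl : m = 0 := by omega
    simp
  | succ M ih =>
    obtain ⟨B, h1, h2, h3⟩ := ih
    have hst : (B : Set ((Fin n → ZMod (p ^ K)) × ℕ)) ⊆
        {b | b.1 ∈ primSet n (ZMod (p ^ K)) ∧ b.2 < M + 1} := by
      intro b hb
      exact ⟨(h1 b hb).1, (h1 b hb).2.trans (Nat.lt_succ_self _)⟩
    obtain ⟨B', hB't, hBB', hsp, hli⟩ := exists_linearIndepOn_extension h2 hst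
    have hfin : B'.Finite := by
      refine Set.Finite.subset ?_ hB't
      refine Set.Finite.subset (Finset.finite_toSet
        (primSet n (ZMod (p ^ K)) ×ˢ Finset.range (M+1))) ?_
      intro b hb
      simpa using hb
    lift B' to Finset ((Fin n → ZMod (p ^ K)) × ℕ) using hfin
    refine ⟨B', fun b hb => hB't hb, hli, ?_⟩
    intro m hm
    rcases Nat.lt_or_ge M m with h | h
    · obtain rfl : m = M + 1 := by omega
      have e1 : (B'.filter (fun b => b.2 < M + 1)) = B' := by
        rw [Finset.filter_eq_self]
        exact fun b hb => (hB't hb).2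
      rw [e1]
      refine le_trans (Submodule.finrank_mono (Submodule.span_le.2 hsp)) ?_
      rw [← Finset.coe_image]
      exact (finrank_span_finset_le_card _).trans Finset.card_image_le
    · refine (h3 m h).trans (Finset.card_le_card ?_)
      exact Finset.filter_subset_filter _ (by exact_mod_cast hBB')

/-- reduction -/
def redv {p K k n : ℕ} (h : p ^ k ∣ p ^ K) (u : Fin n → ZMod (p ^ K)) : Fin n → ZMod (p ^ k) :=
  fun i => ZMod.castHom h (ZMod (p ^ k)) (u i)

lemma unit_coord_rel (p : ℕ) [Fact p.Prime] (K n : ℕ) (hK : 1 ≤ K) (u : Fin n → ZMod (p ^ K))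
    (hu : u ∈ primSet n (ZMod (p ^ K))) :
    ∃ g : (Matrix (Fin n) (Fin n) (ZMod (p ^ K)))ˣ, g.1.mulVec 1 = u := by
  have hp : p.Prime := Fact.out
  have key : ∀ (u : Fin n → ZMod (p ^ K)) (i : Fin n), IsUnit (u i) →
      ∃ g : (Matrix (Fin n) (Fin n) (ZMod (p ^ K)))ˣ, g.1.mulVec (Pi.single i 1) = u := by
    intro u i hi
    have hdet : ((1 : Matrix (Fin n) (Fin n) (ZMod (p ^ K))).updateCol i u).det = u i := by
      rw [← Matrix.cramer_apply, Matrix.cramer_one]; rfl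
    have : IsUnit ((1 : Matrix (Fin n) (Fin n) (ZMod (p ^ K))).updateCol i u) := by
      rw [Matrix.isUnit_iff_isUnit_det, hdet]; exact hi
    obtain ⟨g, hg⟩ := this
    refine ⟨g, ?_⟩
    rw [hg, Matrix.mulVec_single_one]
    ext j
    simp
  obtain ⟨i, hi⟩ := (prim_iff p K n hK u).1 hu
  have hi' : IsUnit (u i) := by
    rw [← ZMod.natCast_zmod_val (u i), ZMod.isUnit_iff_coprime, Nat.coprime_pow_right_iff (by omega),
      Nat.coprime_comm, hp.coprime_iff_not_dvd]
    exact hi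
  obtain ⟨g, hg⟩ := key u i hi'
  obtain ⟨h, hh⟩ := key 1 i (by simp)
  refine ⟨g * h⁻¹, ?_⟩
  rw [← hg, ← hh, Matrix.mulVec_mulVec, Units.val_mul, mul_assoc, ← Units.val_mul, inv_mul_cancel,
    Units.val_one, mul_one]

lemma avg_GL (p : ℕ) [Fact p.Prime] (K k n : ℕ) (hk : 1 ≤ k) (hd : p ^ k ∣ p ^ K)
    [Fintype (Matrix (Fin n) (Fin n) (ZMod (p ^ K)))ˣ]
    (F : (Fin n → ZMod (p ^ k)) → ℝ) (u : Fin n → ZMod (p ^ K))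
    (hu : u ∈ primSet n (ZMod (p ^ K))) :
    ((primSet n (ZMod (p ^ k))).card : ℝ) *
      ∑ g : (Matrix (Fin n) (Fin n) (ZMod (p ^ K)))ˣ, F (redv hd (g.1.mulVec u)) =
    (Fintype.card (Matrix (Fin n) (Fin n) (ZMod (p ^ K)))ˣ : ℝ) *
      ∑ v ∈ primSet n (ZMod (p ^ k)), F v := by
  have hp : p.Prime := Fact.out
  have hkK : k ≤ K := (Nat.pow_dvd_pow_iff_le_right hp.one_lt).1 hd
  have hK : 1 ≤ K := hk.trans hkK
  have hconst : ∀ u ∈ primSet n (ZMod (p ^ K)),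
      ∑ g : (Matrix (Fin n) (Fin n) (ZMod (p ^ K)))ˣ, F (redv hd (g.1.mulVec u)) =
      ∑ g : (Matrix (Fin n) (Fin n) (ZMod (p ^ K)))ˣ, F (redv hd (g.1.mulVec 1)) := by
    intro u hu
    obtain ⟨h, rfl⟩ := unit_coord_rel p K n hK u hu
    refine Fintype.sum_equiv (Equiv.mulRight h) _ _ ?_
    intro g
    simp [Matrix.mulVec_mulVec]
  let lift : (Fin n → ZMod (p ^ k)) → (Fin n → ZMod (p ^ K)) := fun v i => ((v i).val : ZMod (p ^ K))
  have hlift : ∀ v ∈ primSet n (ZMod (p ^ k)), lift v ∈ primSet n (ZMod (p ^ K)) := by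
    intro v hv
    rw [prim_iff p _ n hk] at hv
    rw [prim_iff p _ n hK]
    obtain ⟨i, hi⟩ := hv
    refine ⟨i, ?_⟩
    simp only [lift, ZMod.val_natCast]
    rwa [Nat.dvd_mod_iff (dvd_pow_self p (by omega))]
  have hredlift : ∀ v, redv hd (lift v) = v := by
    intro v
    ext i
    simp only [redv, lift, map_natCast, ZMod.natCast_zmod_val]
  have hred : ∀ (g : Matrix (Fin n) (Fin n) (ZMod (p ^ K))) u, redv hd (g.mulVec u) =
      (g.map (ZMod.castHom hd (ZMod (p ^ k)))).mulVec (redv hd u) := by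
    intro g u
    ext i
    simp only [redv]
    rw [RingHom.map_mulVec]
    rfl
  let act : (Matrix (Fin n) (Fin n) (ZMod (p ^ K)))ˣ → (Fin n → ZMod (p ^ k)) → (Fin n → ZMod (p ^ k)) :=
    fun g v => redv hd (g.1.mulVec (lift v))
  have hact : ∀ g v, act g v = (g.1.map (ZMod.castHom hd (ZMod (p ^ k)))).mulVec v := by
    intro g v
    simp only [act]
    rw [hred, hredlift]
  have hinv : ∀ g v, act g⁻¹ (act g v) = v := by
    intro g v
    rw [hact, hact, Matrix.mulVec_mulVec, ← Matrix.map_mul, ← Units.val_mul, inv_mul_cancel,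
      Units.val_one, Matrix.map_one _ (map_zero _) (map_one _), Matrix.one_mulVec]
  have hprim : ∀ g, ∀ v ∈ primSet n (ZMod (p ^ k)), act g v ∈ primSet n (ZMod (p ^ k)) := by
    intro g v hv
    simp only [primSet, Finset.mem_filter, Finset.mem_univ, true_and] at hv ⊢
    obtain ⟨w, hw⟩ := hv
    refine ⟨((g⁻¹).1.map (ZMod.castHom hd (ZMod (p ^ k)))).vecMul w, ?_⟩
    change Matrix.vecMul w _ ⬝ᵥ _ = 1
    rw [← Matrix.dotProduct_mulVec, ← hact, hinv]
    exact hw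
  have hA : ∀ v ∈ primSet n (ZMod (p ^ k)), 
      ∑ g : (Matrix (Fin n) (Fin n) (ZMod (p ^ K)))ˣ, F (redv hd (g.1.mulVec u)) =
      ∑ g : (Matrix (Fin n) (Fin n) (ZMod (p ^ K)))ˣ, F (act g v) := by
    intro v hv
    rw [hconst u hu, ← hconst _ (hlift v hv)]
  rw [← nsmul_eq_mul, ← Finset.sum_const, Finset.sum_congr rfl hA, Finset.sum_comm,
    ← nsmul_eq_mul, ← Finset.card_univ, ← Finset.sum_const]
  refine Finset.sum_congr rfl fun g _ => ?_
  refine Finset.sum_nbij' (act g) (act g⁻¹) (hprim g) (hprim g⁻¹) (fun v _ => hinv g v) ?_ ?_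
  · intro v _
    have := hinv g⁻¹ v
    rwa [inv_inv] at this
  · intros; rfl

lemma phi_indep_act (p : ℕ) [Fact p.Prime] (K n : ℕ)
    (B : Finset ((Fin n → ZMod (p ^ K)) × ℕ))
    (hB : LinearIndepOn (ZMod p) (phi p K n) (B : Set _))
    (g : (Matrix (Fin n) (Fin n) (ZMod (p ^ K)))ˣ) :
    LinearIndependent (ZMod p) (fun b : B => phi p K n (g.1.mulVec b.1.1, b.1.2)) := by
  have h1 : LinearIndependent (ZMod p) (fun b : B => phi p K n b.1) := hB
  have hsurj : Function.Surjective (fun e : Fin n → ZMod (p ^ K) => g.1.transpose.mulVec e) := by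
    intro e
    refine ⟨(g⁻¹).1.transpose.mulVec e, ?_⟩
    simp only [Matrix.mulVec_mulVec]
    rw [← Matrix.transpose_mul, ← Units.val_mul, inv_mul_cancel]
    simp
  have h2 := h1.map' (LinearMap.funLeft (ZMod p) (ZMod p) _)
    (LinearMap.ker_eq_bot.2 (LinearMap.funLeft_injective_of_surjective (ZMod p) (ZMod p) _ hsurj))
  have e : (fun b : B => phi p K n (g.1.mulVec b.1.1, b.1.2)) =
    (LinearMap.funLeft (ZMod p) (ZMod p) fun e => (g.1).transpose.mulVec e) ∘
      fun b : B => phi p K n b.1 := ?_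
  · rw [e]; exact h2
  ext b e
  simp only [phi, Function.comp, LinearMap.funLeft_apply]
  congr 3
  rw [Matrix.mulVec_transpose, dotProduct_comm b.1.1, ← Matrix.dotProduct_mulVec, dotProduct_comm]

open Polynomial in
lemma exists_ringA (p : ℕ) [Fact p.Prime] (k : ℕ) (hk : 1 ≤ k) :
    ∃ (A : Type) (_ : CommRing A) (_ : IsDomain A) (ζ : A) (π : A →+* ZMod p),
      IsPrimitiveRoot ζ (p ^ k) ∧ π ζ = 1 := by
  have hp : p.Prime := Fact.out
  have hpos : 0 < p ^ k := pow_pos hp.pos k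
  have : Fact (Irreducible (cyclotomic (p ^ k) ℤ)) := ⟨cyclotomic.irreducible hpos⟩
  have hprime : Prime (cyclotomic (p ^ k) ℤ) := this.out.prime
  have hdom : IsDomain (AdjoinRoot (cyclotomic (p ^ k) ℤ)) :=
    AdjoinRoot.isDomain_of_prime hprime
  have hinj : Function.Injective (AdjoinRoot.of (cyclotomic (p ^ k) ℤ)) := by
    apply AdjoinRoot.of.injective_of_degree_ne_zero
    rw [degree_cyclotomic]
    exact_mod_cast (Nat.totient_pos.2 hpos).ne'
  have hch : CharZero (AdjoinRoot (cyclotomic (p ^ k) ℤ)) := charZero_of_injective_ringHom hinj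
  have hne : NeZero ((p ^ k : ℕ) : AdjoinRoot (cyclotomic (p ^ k) ℤ)) :=
    ⟨by exact_mod_cast hpos.ne'⟩
  refine ⟨AdjoinRoot (cyclotomic (p ^ k) ℤ), inferInstance, hdom, AdjoinRoot.root _,
    AdjoinRoot.lift (Int.castRingHom (ZMod p)) 1 ?_, ?_, ?_⟩
  · rw [← eval_map, map_cyclotomic]
    obtain ⟨k', rfl⟩ : ∃ k', k = k' + 1 := ⟨k - 1, by omega⟩
    rw [eval_one_cyclotomic_prime_pow]
    simp
  · rw [← isRoot_cyclotomic_iff]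
    have h1 : cyclotomic (p ^ k) (AdjoinRoot (cyclotomic (p ^ k) ℤ)) =
        (cyclotomic (p ^ k) ℤ).map (AdjoinRoot.of (cyclotomic (p ^ k) ℤ)) :=
      (map_cyclotomic _ _).symm
    rw [h1, IsRoot.def, eval_map]
    exact AdjoinRoot.eval₂_root (cyclotomic (p ^ k) ℤ)
  · simp

open Polynomial in
lemma coeff_mod_X_pow {F : Type} [CommRing F] [Nontrivial F] (f : F[X]) (m j : ℕ) (hj : j < m) :
    (f %ₘ X ^ m).coeff j = f.coeff j := by
  conv_rhs => rw [← modByMonic_add_div f (X ^ m)]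
  rw [coeff_add, coeff_X_pow_mul', if_neg (by omega), add_zero]

lemma lift_rank {F A : Type} [Field F] [CommRing A] [IsDomain A] (π : A →+* F)
    (hπ : Function.Surjective π) {ι E : Type} [Fintype ι] [Fintype E] [DecidableEq ι] [DecidableEq E]
    (Bm : Matrix ι E A)
    (hli : LinearIndependent F (fun b : ι => fun e : E => π (Bm b e)))
    {L : Type} [Field L] (al : A →+* L) (hal : Function.Injective al) :
    Function.Surjective ((Bm.map al).mulVec) := by
  let Φ : Matrix ι E F := Bm.map π
  have hli' : LinearIndependent F Φ.row := hli
  have hsurj : Function.Surjective Φ.mulVec := by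
    have h1 := hli'.rank_matrix
    have h2 : LinearMap.range Φ.mulVecLin = ⊤ := by
      apply Submodule.eq_top_of_finrank_eq
      rw [Module.finrank_fintype_fun_eq_card]
      exact h1
    exact LinearMap.range_eq_top.1 h2
  obtain ⟨D, hD⟩ := Matrix.mulVec_surjective_iff_exists_right_inverse.1 hsurj
  choose g hg using hπ
  let D' : Matrix E ι A := D.map g
  have hD' : D'.map π = D := by ext; simp [D', hg]
  have hdet : (Bm * D').det ≠ 0 := by
    intro h
    have h2 := congrArg π h
    rw [RingHom.map_det, map_zero, RingHom.mapMatrix_apply, Matrix.map_mul, hD'] at h2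
    change (Φ * D).det = 0 at h2
    rw [hD] at h2
    simp at h2
  have hdet2 : IsUnit ((Bm.map al * D'.map al).det) := by
    rw [← Matrix.map_mul, ← RingHom.mapMatrix_apply, ← RingHom.map_det, isUnit_iff_ne_zero]
    exact fun h => hdet (hal (by rw [map_zero]; exact h))
  intro y
  refine ⟨(D'.map al).mulVec ((Bm.map al * D'.map al)⁻¹.mulVec y), ?_⟩
  rw [Matrix.mulVec_mulVec, Matrix.mulVec_mulVec, Matrix.mul_nonsing_inv _ hdet2, Matrix.one_mulVec]

lemma card_le_of_ker {L : Type} [Field L] {E ι κ : Type} [Fintype E] [Fintype ι] [Fintype κ]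
    (b : (E → L) →ₗ[L] (ι → L)) (c : (E → L) →ₗ[L] (κ → L)) (hb : Function.Surjective b)
    (h : ∀ x, c x = 0 → b x = 0) : Fintype.card ι ≤ Fintype.card κ := by
  have h1 := LinearMap.finrank_range_add_finrank_ker b
  have h2 := LinearMap.finrank_range_add_finrank_ker c
  have h3 : Module.finrank L (LinearMap.ker c) ≤ Module.finrank L (LinearMap.ker b) :=
    Submodule.finrank_mono h
  have h4 : Module.finrank L (LinearMap.range b) = Fintype.card ι := by
    rw [LinearMap.range_eq_top.2 hb, finrank_top, Module.finrank_fintype_fun_eq_card]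
  have h5 : Module.finrank L (LinearMap.range c) ≤ Fintype.card κ := by
    rw [← Module.finrank_fintype_fun_eq_card (R := L) (η := κ)]
    exact Submodule.finrank_le _
  omega

open Polynomial in
/-- Taylor expansion vanishing. -/
lemma taylor_dvd {L : Type} [Field L] {n : ℕ} {E : Type} [Fintype E] (N M : ℕ)
    (ex : E → Fin n → ℕ) (hex : ∀ e i, ex e i < N) (c : E → L) (P : Fin n → L[X]) (w : L)
    (h : ∀ α : Fin n → ℕ, ∑ i, α i < M →
      ∑ e, c e * ∏ i, ((P i).eval w ^ (ex e i - α i) * ((ex e i).choose (α i) : L)) = 0) :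
    (X - C w) ^ M ∣ ∑ e, C (c e) * ∏ i, P i ^ (ex e i) := by
  have h1 : ∀ i, ∃ G : L[X], P i = (X - C w) * G + C ((P i).eval w) := by
    intro i
    obtain ⟨G, hG⟩ := X_sub_C_dvd_sub_C_eval (a := w) (p := P i)
    exact ⟨G, by rw [← hG]; ring⟩
  choose G hG using h1
  have h2 : ∀ e i, P i ^ (ex e i) = ∑ m ∈ Finset.range N,
      ((X - C w) ^ m * G i ^ m) * C ((P i).eval w ^ (ex e i - m) * ((ex e i).choose m : L)) := by
    intro e i
    conv_lhs => rw [hG i, add_pow]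
    refine Eq.trans ?_ (Finset.sum_subset (s₁ := Finset.range (ex e i + 1))
      (s₂ := Finset.range N) ?_ ?_)
    · refine Finset.sum_congr rfl fun m _ => ?_
      rw [mul_pow, C_mul, C_pow, C_eq_natCast]
      ring
    · intro x hx
      have := hex e i
      simp at hx ⊢
      omega
    · intro m _ hm
      simp at hm
      rw [Nat.choose_eq_zero_of_lt (by omega)]
      simp
  have h3 : ∑ e, C (c e) * ∏ i, P i ^ (ex e i) =
      ∑ α ∈ Fintype.piFinset (fun _ : Fin n => Finset.range N),
        ((X - C w) ^ (∑ i, α i) * ∏ i, G i ^ (α i)) *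
        C (∑ e, c e * ∏ i, ((P i).eval w ^ (ex e i - α i) * ((ex e i).choose (α i) : L))) := by
    simp_rw [h2, Finset.prod_univ_sum, map_sum, Finset.mul_sum]
    rw [Finset.sum_comm]
    refine Finset.sum_congr rfl fun α _ => Finset.sum_congr rfl fun e _ => ?_
    rw [Finset.prod_mul_distrib, Finset.prod_mul_distrib, Finset.prod_pow_eq_pow_sum, C_mul,
      map_prod]
    ring
  rw [h3]
  refine Finset.dvd_sum fun α _ => ?_
  by_cases hα : ∑ i, α i < M
  · rw [h α hα]; simp
  · refine Dvd.dvd.mul_right (Dvd.dvd.mul_right (pow_dvd_pow _ (by omega)) _) _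

open Polynomial in
lemma rank_bound (p : ℕ) [Fact p.Prime] (k l n : ℕ) (hk : 1 ≤ k) (hd : p ^ k ∣ p ^ (k + l))
    (S : Finset (Fin n → ZMod (p ^ k))) (D : Finset (Fin n → ℕ))
    (hD : ∀ α : Fin n → ℕ, ∑ i, α i < p ^ l → α ∈ D)
    {ι : Type} [Fintype ι] (b : ι → (Fin n → ZMod (p ^ (k + l))) × ℕ)
    (hli : LinearIndependent (ZMod p) (fun x => phi p (k + l) n (b x)))
    (hb : ∀ x, (b x).2 < p ^ l * tau S (redv hd (b x).1)) :
    Fintype.card ι ≤ S.card * D.card := by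
  classical
  have hp : p.Prime := Fact.out
  obtain ⟨A, _, _, ζ, π, hζ, hπ⟩ := exists_ringA p k hk
  have hpow : ∀ (a : ℕ) , ζ ^ ((a : ZMod (p ^ k)).val) = ζ ^ a := by
    intro a
    rw [ZMod.val_natCast]
    conv_rhs => rw [← Nat.mod_add_div a (p ^ k), pow_add, pow_mul, hζ.pow_eq_one, one_pow, mul_one]
  choose a ha using fun x => exists_tau S (redv hd (b x).1)
  let T : ι → Finset (ZMod (p ^ k)) := fun x =>
    Finset.univ.filter fun t => a x + t • redv hd (b x).1 ∈ S
  let P : ι → Fin n → A[X] := fun x i => C (ζ ^ (a x i).val) * (1 + X) ^ ((b x).1 i).val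
  let Pe : ι → (Fin n → ZMod (p ^ (k + l))) → A[X] := fun x e => ∏ i, P x i ^ (e i).val
  let h : ι → A[X] := fun x => ∏ t ∈ T x, (X - C (ζ ^ t.val - 1)) ^ (p ^ l)
  have hmon : ∀ x, (h x).Monic := fun x => monic_prod_of_monic _ _ fun t _ => (monic_X_sub_C _).pow _
  let Bm : Matrix ι (Fin n → ZMod (p ^ (k + l))) A := fun x e => (Pe x e %ₘ h x).coeff (b x).2
  have hBm : ∀ x e, π (Bm x e) = phi p (k + l) n (b x) e := by
    intro x e
    have e1 : (h x).map π = X ^ (p ^ l * tau S (redv hd (b x).1)) := by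
      simp only [h]
      rw [Polynomial.map_prod]
      have e0 : ∀ t ∈ T x, ((X - C (ζ ^ t.val - 1)) ^ (p ^ l) : A[X]).map π = X ^ (p ^ l) := by
        intro t _
        rw [Polynomial.map_pow, Polynomial.map_sub, map_X, map_C]
        simp [hπ]
      rw [Finset.prod_congr rfl e0, Finset.prod_const, ← pow_mul, ha x]
      simp only [T]
      congr!
    have e2 : (Pe x e).map π = (1 + X) ^ (∑ i, ((b x).1 i).val * (e i).val) := by
      simp only [Pe, P]
      rw [Polynomial.map_prod, ← Finset.prod_pow_eq_pow_sum]
      refine Finset.prod_congr rfl fun i _ => ?_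
      simp [hπ, ← pow_mul]
    simp only [Bm]
    rw [← coeff_map, map_modByMonic _ (hmon x), e1, coeff_mod_X_pow _ _ _ (hb x), e2,
      coeff_one_add_X_pow]
    simp only [phi]
    have hlt : (b x).2 < p ^ (k + l) := by
      refine lt_of_lt_of_le (hb x) ?_
      have h1 := tau_le S (redv hd (b x).1)
      rw [ZMod.card] at h1
      refine (Nat.mul_le_mul_left _ h1).trans_eq ?_
      rw [pow_add, mul_comm]
    rw [← choose_val p (k + l) _ _ hlt]
    congr 3
    simp [dotProduct]
  obtain ⟨L, _, al, halinj⟩ : ∃ (L : Type) (_ : Field L) (al : A →+* L), Function.Injective al :=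
    ⟨FractionRing A, inferInstance, algebraMap A _, IsFractionRing.injective A _⟩
  have hsurj := lift_rank π (ZMod.ringHom_surjective π) Bm (by simpa only [hBm] using hli) al halinj
  let cond : ((Fin n → ZMod (p ^ (k + l))) → L) →ₗ[L] ((S × D) → L) :=
    Matrix.mulVecLin (fun (q : S × D) (e : Fin n → ZMod (p ^ (k + l))) =>
      ∏ i, ((al (ζ ^ (q.1.1 i).val)) ^ ((e i).val - q.2.1 i) * (((e i).val).choose (q.2.1 i) : L)))
  have hfin := card_le_of_ker (Bm.map al).mulVecLin cond hsurj ?_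
  · simpa using hfin
  intro c hc
  ext x
  have hG : (h x).map al ∣ ∑ e, C (c e) * (Pe x e).map al := by
    simp only [h]
    rw [Polynomial.map_prod]
    refine Finset.prod_dvd_of_coprime ?_ ?_
    · intro t _ t' _ htt'
      simp only [Function.onFun, Polynomial.map_pow, Polynomial.map_sub, map_X, map_C]
      refine IsCoprime.pow ?_
      refine isCoprime_X_sub_C_of_isUnit_sub ?_
      rw [isUnit_iff_ne_zero, sub_ne_zero]
      intro heq
      have h3 := halinj heq
      have h4 : ζ ^ t.val = ζ ^ t'.val := by linear_combination h3
      exact htt' (ZMod.val_injective _ (hζ.pow_inj (ZMod.val_lt t) (ZMod.val_lt t') h4))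
    · intro t ht
      have ht' : a x + t • redv hd (b x).1 ∈ S := by simpa [T] using ht
      have e1 : ∀ e, (Pe x e).map al = ∏ i, ((P x i).map al) ^ (e i).val := by
        intro e; simp only [Pe]; rw [Polynomial.map_prod]; simp
      simp_rw [e1]
      simp only [Polynomial.map_pow, Polynomial.map_sub, map_X, map_C]
      refine taylor_dvd (L := L) (E := Fin n → ZMod (p ^ (k + l))) (p ^ (k + l)) (p ^ l)
        (fun e i => (e i).val) (fun e i => ZMod.val_lt (e i)) c
        (fun i => (P x i).map al) (al (ζ ^ t.val - 1)) ?_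
      intro α hα
      have h5 := congrFun hc (⟨_, ht'⟩, ⟨α, hD α hα⟩)
      simp only [cond, Matrix.mulVecLin_apply, Matrix.mulVec, dotProduct, Pi.zero_apply] at h5
      rw [← h5]
      refine Finset.sum_congr rfl fun e _ => ?_
      rw [mul_comm]
      congr 1
      refine Finset.prod_congr rfl fun i _ => ?_
      congr 2
      simp only [P]
      rw [eval_map, eval₂_at_apply]
      congr 1
      simp only [eval_mul, eval_C, eval_pow, eval_add, eval_one, eval_X, add_sub_cancel]
      rw [← pow_mul, ← pow_add, ← hpow]
      congr 2
      simp only [Pi.add_apply, Pi.smul_apply, redv, smul_eq_mul, Nat.cast_add, Nat.cast_mul,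
        ZMod.natCast_zmod_val]
      congr 2
      conv_rhs => rw [← ZMod.natCast_zmod_val ((b x).1 i)]
      rw [map_natCast]
  have hz : (∑ e, C (c e) * (Pe x e).map al) %ₘ ((h x).map al) = 0 :=
    (modByMonic_eq_zero_iff_dvd ((hmon x).map al)).2 hG
  have h6 : ∑ e, c e * ((Pe x e).map al %ₘ (h x).map al).coeff (b x).2 = 0 := by
    have h7 := congrArg (fun q => coeff q (b x).2) hz
    simp only [coeff_zero] at h7
    rw [← h7, ← modByMonicHom_apply, map_sum, finsetSum_coeff]
    refine Finset.sum_congr rfl fun e _ => ?_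
    rw [← smul_eq_C_mul, map_smul, coeff_smul, smul_eq_mul, modByMonicHom_apply]
  simp only [Matrix.mulVecLin_apply, Matrix.mulVec, dotProduct, Pi.zero_apply, Matrix.map_apply, Bm]
  rw [← h6]
  refine Finset.sum_congr rfl fun e _ => ?_
  rw [mul_comm, ← map_modByMonic _ (hmon x), coeff_map]
  rfl

def sx (n q : ℕ) : Finset (Fin n → ℕ) :=
  (Fintype.piFinset fun _ => Finset.range q).filter (fun α => ∑ i, α i < q)

lemma mem_sx {n q : ℕ} {α : Fin n → ℕ} : α ∈ sx n q ↔ ∑ i, α i < q := by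
  simp only [sx, Finset.mem_filter, Fintype.mem_piFinset, Finset.mem_range, and_iff_right_iff_imp]
  intro h i
  exact lt_of_le_of_lt (Finset.single_le_sum (f := α) (fun _ _ => Nat.zero_le _) (Finset.mem_univ i)) h

lemma card_sx (n Q : ℕ) : (sx n (Q + 1)).card = (Q + n).choose n := by
  have h : (sx n (Q + 1)).card = (Finset.piAntidiag (Finset.univ : Finset (Fin (n + 1))) Q).card := by
    refine Finset.card_bij (fun α _ => Fin.cons (Q - ∑ i, α i) α) ?_ ?_ ?_
    · intro α hα
      rw [mem_sx] at hα
      simp only [Finset.mem_piAntidiag, Fin.sum_univ_succ, Fin.cons_zero, Fin.cons_succ]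
      refine ⟨by omega, by simp⟩
    · intro α _ β _ h
      exact (Fin.cons_inj.1 h).2
    · intro f hf
      simp only [Finset.mem_piAntidiag, Fin.sum_univ_succ] at hf
      refine ⟨Fin.tail f, ?_, ?_⟩
      · rw [mem_sx]
        have := hf.1
        simp only [Fin.tail]
        omega
      · conv_rhs => rw [← Fin.cons_self_tail f]
        congr 1
        have := hf.1
        simp only [Fin.tail]
        omega
  have h' : (Finset.piAntidiag (Finset.univ : Finset (Fin (n + 1))) Q).card =
      (Finset.finsuppAntidiag (Finset.univ : Finset (Fin (n + 1))) Q).card := by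
    symm
    refine Finset.card_bij (fun f _ => ⇑f) ?_ ?_ ?_
    · intro f hf
      rw [Finset.mem_finsuppAntidiag] at hf
      rw [Finset.mem_piAntidiag]
      exact ⟨hf.1, by simp⟩
    · intro f _ g _ h
      exact DFunLike.coe_injective h
    · intro f hf
      rw [Finset.mem_piAntidiag] at hf
      exact ⟨Finsupp.equivFunOnFinite.symm f, by
        rw [Finset.mem_finsuppAntidiag]; exact ⟨hf.1, by simp⟩, rfl⟩
  rw [h, h', Finset.card_finsuppAntidiag_nat_eq_choose]
  simp only [Finset.card_univ, Fintype.card_fin]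
  rw [show n + 1 + Q - 1 = Q + n by omega]
  exact (Nat.choose_symm_add (a := Q) (b := n))

lemma sx_mul (n Q : ℕ) : n.factorial * (sx n (Q + 1)).card = ∏ i ∈ Finset.range n, (Q + 1 + i) := by
  rw [card_sx, ← Nat.ascFactorial_eq_factorial_mul_choose, Nat.ascFactorial_eq_prod_range]

lemma sx_ratio (n q M : ℕ) (hM : 1 ≤ M) (hnM : n ≤ M) (hn : n ≠ 0) :
    q ^ n * (sx n M).card ≤ (2 * M) ^ n * (sx n q).card := by
  rcases Nat.eq_zero_or_pos q with rfl | hq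
  · simp [hn]
  obtain ⟨Q, rfl⟩ : ∃ Q, q = Q + 1 := ⟨q - 1, by omega⟩
  obtain ⟨m, rfl⟩ : ∃ m, M = m + 1 := ⟨M - 1, by omega⟩
  have hf := Nat.factorial_pos n
  refine Nat.le_of_mul_le_mul_left ?_ hf
  have h1 := sx_mul n Q
  have h2 := sx_mul n m
  calc n.factorial * ((Q + 1) ^ n * (sx n (m + 1)).card)
      = (Q + 1) ^ n * ∏ i ∈ Finset.range n, (m + 1 + i) := by rw [← h2]; ring
    _ = ∏ i ∈ Finset.range n, ((Q + 1) * (m + 1 + i)) := by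
        rw [Finset.prod_mul_distrib]; simp
    _ ≤ ∏ i ∈ Finset.range n, ((2 * (m + 1)) * (Q + 1 + i)) := by
        refine Finset.prod_le_prod' fun i hi => ?_
        have := Finset.mem_range.1 hi
        have h3 : m + 1 + i ≤ 2 * (m + 1) := by omega
        calc (Q + 1) * (m + 1 + i) ≤ (Q + 1) * (2 * (m + 1)) := Nat.mul_le_mul_left _ h3
          _ ≤ (Q + 1 + i) * (2 * (m + 1)) := Nat.mul_le_mul_right _ (by omega)
          _ = _ := by ring
    _ = (2 * (m + 1)) ^ n * ∏ i ∈ Finset.range n, (Q + 1 + i) := by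
        rw [Finset.prod_mul_distrib]; simp
    _ = _ := by rw [← h1]; ring

lemma sx_ratio_real (n q M K t : ℕ) (hM : 1 ≤ M) (hnM : n ≤ M) (hn : n ≠ 0) (hK : 1 ≤ K)
    (hq : M * t ≤ K * q) :
    ((t : ℝ) / (2 * K)) ^ n * (sx n M).card ≤ (sx n q).card := by
  have h1 : (q : ℝ) ^ n * (sx n M).card ≤ (2 * M : ℝ) ^ n * (sx n q).card := by
    exact_mod_cast sx_ratio n q M hM hnM hn
  have hM' : (0 : ℝ) < M := by exact_mod_cast hM
  have hK' : (0 : ℝ) < K := by exact_mod_cast hK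
  have h2 : (t : ℝ) / (2 * K) ≤ q / (2 * M) := by
    rw [div_le_div_iff₀ (by positivity) (by positivity)]
    have : (M : ℝ) * t ≤ K * q := by exact_mod_cast hq
    nlinarith
  calc ((t : ℝ) / (2 * K)) ^ n * (sx n M).card
      ≤ (q / (2 * M)) ^ n * (sx n M).card := by gcongr
    _ = (q : ℝ) ^ n * (sx n M).card / (2 * M : ℝ) ^ n := by rw [div_pow]; ring
    _ ≤ _ := by
        rw [div_le_iff₀ (by positivity)]; linarith

lemma KB_pp_aux (p : ℕ) [Fact p.Prime] (k l n : ℕ) (hk : 1 ≤ k) (hn : n ≠ 0) (hl : n ≤ p ^ l) :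
    KB n (ZMod (p ^ k)) ((1 / (2 * ((k : ℝ) + l))) ^ n) := by
  classical
  intro S
  have hp : p.Prime := Fact.out
  have hd : p ^ k ∣ p ^ (k + l) := pow_dvd_pow _ (by omega)
  obtain ⟨B, hB1, hB2, hB3⟩ := chain_basis p (k + l) n (p ^ (k + l))
  have : Fintype (Matrix (Fin n) (Fin n) (ZMod (p ^ (k + l))))ˣ := Fintype.ofFinite _
  let G := (Matrix (Fin n) (Fin n) (ZMod (p ^ (k + l))))ˣ
  have hG : (0 : ℝ) < (Fintype.card G : ℝ) := by exact_mod_cast Fintype.card_pos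
  let F : ℕ → (Fin n → ZMod (p ^ k)) → ℝ := fun j v => if j < p ^ l * tau S v then 1 else 0
  have key : ∀ g : G, ∑ b ∈ B, F b.2 (redv hd (g.1.mulVec b.1)) ≤ (S.card : ℝ) * (sx n (p ^ l)).card := by
    intro g
    have h1 := phi_indep_act p (k + l) n B hB2 g
    let ι := {b : B // b.1.2 < p ^ l * tau S (redv hd (g.1.mulVec b.1.1))}
    have h2 := rank_bound p k l n hk hd S (sx n (p ^ l)) (fun α h => mem_sx.2 h) (ι := ι)
      (fun x => (g.1.mulVec x.1.1.1, x.1.1.2)) (h1.comp (fun x : ι => x.1) Subtype.val_injective)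
      (fun x => x.2)
    have h3 : ∑ b ∈ B, F b.2 (redv hd (g.1.mulVec b.1)) = (Fintype.card ι : ℝ) := by
      rw [← Finset.sum_coe_sort, Fintype.card_subtype]
      simp only [F]
      rw [Finset.sum_boole]
    rw [h3]
    exact_mod_cast h2
  have lower : ∀ v : Fin n → ZMod (p ^ k),
      ((tau S v : ℝ) / (2 * (k + l : ℕ))) ^ n * (sx n (p ^ l)).card ≤ ∑ b ∈ B, F b.2 v := by
    intro v
    have hm : p ^ l * tau S v ≤ p ^ (k + l) := by
      have h1 := tau_le S v
      rw [ZMod.card] at h1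
      refine (Nat.mul_le_mul_left _ h1).trans_eq ?_
      rw [pow_add, mul_comm]
    have h1 := hB3 _ hm
    set q := (p ^ l * tau S v + (k + l) - 1) / (k + l) with hq
    have hq1 : p ^ l * tau S v ≤ (k + l) * q := by
      have := Nat.div_add_mod (p ^ l * tau S v + (k + l) - 1) (k + l)
      have h2 := Nat.mod_lt (p ^ l * tau S v + (k + l) - 1) (show k + l > 0 by omega)
      rw [← hq] at this
      omega
    have hq2 : ∀ s, s < q → (k + l) * s < p ^ l * tau S v := by
      intro s hs
      have := Nat.div_mul_le_self (p ^ l * tau S v + (k + l) - 1) (k + l)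
      rw [← hq] at this
      have h3 : (s + 1) * (k + l) ≤ q * (k + l) := Nat.mul_le_mul_right _ hs
      have h4 : (s + 1) * (k + l) = (k + l) * s + (k + l) := by ring
      omega
    have h2 := finrank_ge p (k + l) n _ (by omega) hn hm (sx n q) (by
      intro e he i
      have h5 := hq2 _ (mem_sx.1 he)
      have h6 := Finset.single_le_sum (f := e) (fun _ _ => Nat.zero_le _) (Finset.mem_univ i)
      have h7 : 1 * ∑ i, e i ≤ (k + l) * ∑ i, e i := Nat.mul_le_mul_right _ (by omega)
      omega) (fun e he => hq2 _ (mem_sx.1 he))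
    refine (sx_ratio_real n q (p ^ l) (k + l) (tau S v) (Nat.pos_of_ne_zero (pow_ne_zero _ hp.ne_zero))
      hl hn (by omega) hq1).trans ?_
    simp only [F]
    rw [Finset.sum_boole]
    exact_mod_cast h2.trans h1
  have hs : (0 : ℝ) < (sx n (p ^ l)).card := by
    have : 0 < (sx n (p ^ l)).card := Finset.card_pos.2 ⟨0, mem_sx.2 (by simp [hp.pos])⟩
    exact_mod_cast this
  have avg : ∀ b ∈ B, ((primSet n (ZMod (p ^ k))).card : ℝ) *
      ∑ g : G, F b.2 (redv hd (g.1.mulVec b.1)) = (Fintype.card G : ℝ) *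
      ∑ v ∈ primSet n (ZMod (p ^ k)), F b.2 v := fun b hb =>
    avg_GL p (k + l) k n hk hd (F b.2) b.1 (hB1 b hb).1
  have tot : (Fintype.card G : ℝ) * ∑ v ∈ primSet n (ZMod (p ^ k)), ∑ b ∈ B, F b.2 v ≤
      (Fintype.card G : ℝ) * (((primSet n (ZMod (p ^ k))).card : ℝ) *
        ((S.card : ℝ) * (sx n (p ^ l)).card)) := by
    rw [Finset.sum_comm, Finset.mul_sum, ← Finset.sum_congr rfl avg, ← Finset.mul_sum, Finset.sum_comm,
      mul_left_comm]
    refine mul_le_mul_of_nonneg_left ?_ (Nat.cast_nonneg _)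
    refine (Finset.sum_le_sum fun g _ => key g).trans_eq ?_
    simp [G]
  have tot2 := le_of_mul_le_mul_left tot hG
  have tot3 := (Finset.sum_le_sum fun v (_ : v ∈ primSet n (ZMod (p ^ k))) => lower v).trans tot2
  rw [← Finset.sum_mul, ← mul_assoc] at tot3
  have tot4 := le_of_mul_le_mul_right tot3 hs
  refine le_trans (le_of_eq ?_) tot4
  rw [Finset.mul_sum]
  refine Finset.sum_congr rfl fun v _ => ?_
  rw [← mul_pow]
  push_cast
  congr 1
  ring

lemma KB_pp (p : ℕ) (hp : p.Prime) (k n : ℕ) (hk : 1 ≤ k) (hn : n ≠ 0) [NeZero (p ^ k)] :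
    KB n (ZMod (p ^ k)) ((1 / (2 * ((k : ℝ) + ((⌈Real.log n / Real.log p⌉ : ℤ) : ℝ)))) ^ n) := by
  have : Fact p.Prime := ⟨hp⟩
  have hlp : 0 < Real.log p := Real.log_pos (by exact_mod_cast hp.one_lt)
  have hln : 0 ≤ Real.log n := Real.log_natCast_nonneg n
  have h0 : (0 : ℤ) ≤ ⌈Real.log n / Real.log p⌉ := Int.ceil_nonneg (by positivity)
  obtain ⟨l, hl⟩ := Int.eq_ofNat_of_zero_le h0
  rw [hl]
  have h1 : n ≤ p ^ l := by
    have h2 := Int.le_ceil (Real.log n / Real.log p)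
    rw [hl, div_le_iff₀ hlp] at h2
    have h3 : Real.log n ≤ Real.log ((p : ℝ) ^ l) := by
      rw [Real.log_pow]; exact_mod_cast h2
    rw [Real.log_le_log_iff (by exact_mod_cast Nat.pos_of_ne_zero hn)
      (by have := hp.pos; positivity)] at h3
    exact_mod_cast h3
  have := KB_pp_aux p k l n hk hn h1
  convert this
  simp

lemma harm_bd (p k : ℕ) (R : Type) [Fintype R] (hR : Fintype.card R = p ^ k) :
    ∑ i ∈ Finset.range (Fintype.card R), (1:ℝ) / ((i:ℝ) + 1) ≤ (k : ℝ) * Real.log p + 1 := by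
  rw [hR]
  have h := harmonic_le_one_add_log (p ^ k)
  rw [Nat.cast_pow, Real.log_pow, add_comm] at h
  refine le_trans (le_of_eq ?_) h
  simp [harmonic]

lemma KB_all (n : ℕ) (hn : n ≠ 0) : ∀ (r : ℕ) (p k : Fin (r + 1) → ℕ) (_ : ∀ i, (p i).Prime)
    (_ : Function.Injective p) (_ : ∀ i, 1 ≤ k i) (N : ℕ) [NeZero N] (_ : N = ∏ i, p i ^ k i),
    KB n (ZMod N) (((∏ j ∈ Finset.univ.filter (fun j : Fin (r + 1) => (j : ℕ) < r + 1 - 1),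
          1 / ((k j : ℝ) * Real.log (p j) + 1)) *
        ∏ i : Fin (r + 1), 1 / (2 * ((k i : ℝ) + ((⌈Real.log n / Real.log (p i)⌉ : ℤ) : ℝ)))) ^ n) := by
  intro r
  induction r with
  | zero =>
    intro p k hp hpd hk N _ hN
    simp only [Fin.prod_univ_one, Nat.reduceAdd] at hN
    subst hN
    have := KB_pp (p 0) (hp 0) (k 0) n (hk 0) hn
    simpa using this
  | succ r ih =>
    intro p k hp hpd hk N _ hN
    rw [Fin.prod_univ_succ] at hN
    set N1 := ∏ i : Fin (r + 1), p i.succ ^ k i.succ with hN1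
    have hne0 : NeZero (p 0 ^ k 0) := ⟨pow_ne_zero _ (hp 0).ne_zero⟩
    have hne1 : NeZero N1 := ⟨Finset.prod_ne_zero_iff.2 fun i _ => pow_ne_zero _ (hp _).ne_zero⟩
    have hco : Nat.Coprime (p 0 ^ k 0) N1 := by
      refine Nat.Coprime.prod_right fun i _ => Nat.Coprime.pow _ _ ?_
      rw [Nat.coprime_primes (hp _) (hp _)]
      exact fun h => (Fin.succ_ne_zero i) (hpd h).symm
    have h1 := ih (fun i => p i.succ) (fun i => k i.succ) (fun i => hp _)
      (fun i j h => Fin.succ_injective _ (hpd h)) (fun i => hk _) N1 hN1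
    have h0 := KB_pp (p 0) (hp 0) (k 0) n (hk 0) hn
    have hlog : ∀ i, 0 ≤ Real.log (p i) := fun i => Real.log_natCast_nonneg _
    have hlogn : 0 ≤ Real.log n := Real.log_natCast_nonneg _
    have hc : ∀ i, (0 : ℝ) ≤ ((⌈Real.log n / Real.log (p i)⌉ : ℤ) : ℝ) := fun i => by
      exact_mod_cast Int.ceil_nonneg (div_nonneg hlogn (hlog i))
    have hfac : ∀ i, (0 : ℝ) ≤ 1 / (2 * ((k i : ℝ) + ((⌈Real.log n / Real.log (p i)⌉ : ℤ) : ℝ))) :=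
      fun i => by have := hc i; positivity
    have hfac2 : ∀ i, (0 : ℝ) ≤ 1 / ((k i : ℝ) * Real.log (p i) + 1) :=
      fun i => by have := hlog i; positivity
    have h2 := KB_prod hn (pow_nonneg (hfac 0) n)
      (pow_nonneg (mul_nonneg (Finset.prod_nonneg fun i _ => hfac2 i.succ)
        (Finset.prod_nonneg fun i _ => hfac i.succ)) n) h0 h1
      (H := (k 0 : ℝ) * Real.log (p 0) + 1) (by have := hlog 0; positivity)
      (harm_bd (p 0) (k 0) _ (ZMod.card _))
    subst hN
    have h3 := KB_equiv (ZMod.chineseRemainder hco).symm h2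
    convert h3 using 1
    rw [← mul_pow, ← mul_pow]
    congr 1
    simp only [Finset.prod_filter]
    rw [Fin.prod_univ_succ (n := r + 1), Fin.prod_univ_succ (n := r + 1)]
    simp only [Fin.val_zero, Fin.val_succ, add_tsub_cancel_right, Nat.add_lt_add_iff_right,
      Nat.zero_lt_succ, if_true]
    ring

lemma KB_final (n N : ℕ) [NeZero N] (C : ℝ) (hC : 0 ≤ C) (h : KB n (ZMod N) C)
    (P : Finset (Fin n → ZMod N)) (hP : IsProjRepSet N n P)
    (S : Finset (Fin n → ZMod N)) :
    C * (P.card : ℝ)⁻¹ *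
      ∑ u ∈ P, ((Finset.univ.sup fun a : Fin n → ZMod N => ((lineF a u) ∩ S).card : ℕ) : ℝ) ^ n
      ≤ (S.card : ℝ) := by
  classical
  rcases P.eq_empty_or_nonempty with rfl | hne
  · simp
  have hpc : (0 : ℝ) < P.card := by exact_mod_cast hne.card_pos
  have hprim : ∀ u : Fin n → ZMod N, u ∈ primSet n (ZMod N) ↔ IsPrimitiveVec u := by
    intro u; simp [primSet, IsPrimitiveVec]
  -- sum over primitive vectors as sum over pairs
  have hsum : ∀ f : (Fin n → ZMod N) → ℝ, ∑ u ∈ primSet n (ZMod N), f u =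
      ∑ w ∈ P, ∑ c : (ZMod N)ˣ, f ((c : ZMod N) • w) := by
    intro f
    rw [← Finset.sum_product']
    symm
    refine Finset.sum_bij (fun x _ => (x.2 : ZMod N) • x.1) ?_ ?_ ?_ ?_
    · rintro ⟨w, c⟩ hx
      rw [Finset.mem_product] at hx
      obtain ⟨v, hv⟩ := hP.1 w hx.1
      rw [hprim]
      refine ⟨fun i => ((c⁻¹ : (ZMod N)ˣ) : ZMod N) * v i, ?_⟩
      rw [← hv]
      refine Finset.sum_congr rfl fun i _ => ?_
      simp only [Pi.smul_apply, smul_eq_mul]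
      have := Units.inv_mul c
      linear_combination (v i * w i) * this
    · rintro ⟨w, c⟩ hx ⟨w', c'⟩ hx' heq
      rw [Finset.mem_product] at hx hx'
      simp only at heq hx hx'
      have hpr : IsPrimitiveVec w := hP.1 w hx.1
      obtain ⟨w0, -, huniq⟩ := hP.2 w hpr
      have e1 := huniq w ⟨hx.1, 1, by simp⟩
      have e2 := huniq w' ⟨hx'.1, c⁻¹ * c', by
        rw [Units.val_mul, mul_smul, ← heq, smul_smul, Units.inv_mul, one_smul]⟩
      have e3 : w = w' := e1.trans e2.symm
      subst e3
      obtain ⟨v, hv⟩ := hpr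
      have e4 : (c : ZMod N) = c' := by
        have h5 : ∑ i, v i * ((c : ZMod N) • w) i = ∑ i, v i * ((c' : ZMod N) • w) i := by rw [heq]
        simp only [Pi.smul_apply, smul_eq_mul, mul_left_comm, ← Finset.mul_sum, hv, mul_one] at h5
        exact h5
      rw [Units.ext e4]
    · intro u hu
      rw [hprim] at hu
      obtain ⟨w, ⟨hw, c, hc⟩, -⟩ := hP.2 u hu
      exact ⟨(w, c), by simp [hw], hc.symm⟩
    · intro _ _; rfl
  have htau : ∀ (w : Fin n → ZMod N) (c : (ZMod N)ˣ), tau S w ≤ tau S ((c : ZMod N) • w) := by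
    intro w c
    obtain ⟨a, ha⟩ := exists_tau S w
    rw [ha]
    refine le_trans ?_ (le_tau S _ a)
    refine Finset.card_le_card_of_injOn (fun t => t * ((c⁻¹ : (ZMod N)ˣ) : ZMod N)) ?_ ?_
    · intro t ht
      simp only [Finset.coe_filter, Finset.mem_univ, true_and, Set.mem_ofPred_eq] at ht ⊢
      rw [smul_smul, mul_assoc, Units.inv_mul, mul_one]
      exact ht
    · intro t _ t' _ htt
      exact (Units.mul_left_inj _).1 htt
  have hline : ∀ u : Fin n → ZMod N,
      (Finset.univ.sup fun a : Fin n → ZMod N => ((lineF a u) ∩ S).card : ℕ) ≤ tau S u := by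
    intro u
    refine Finset.sup_le fun a _ => ?_
    refine le_trans ?_ (le_tau S u a)
    refine le_trans (Finset.card_le_card ?_) (Finset.card_image_le (f := fun t : ZMod N => a + t • u))
    intro x hx
    simp only [lineF, Finset.mem_inter, Finset.mem_image, Finset.mem_univ, true_and,
      Finset.mem_filter] at hx ⊢
    obtain ⟨⟨t, rfl⟩, hx2⟩ := hx
    exact ⟨t, hx2, rfl⟩
  have h1 := h S
  have hcard : ((primSet n (ZMod N)).card : ℝ) = P.card * Fintype.card (ZMod N)ˣ := by
    have := hsum (fun _ => 1)
    simpa using this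
  rw [hcard, hsum] at h1
  have hU : (0 : ℝ) < Fintype.card (ZMod N)ˣ := by exact_mod_cast Fintype.card_pos
  set T := ∑ u ∈ P, ((Finset.univ.sup fun a : Fin n → ZMod N => ((lineF a u) ∩ S).card : ℕ) : ℝ) ^ n
    with hT
  have h2 : (Fintype.card (ZMod N)ˣ : ℝ) * T ≤
      ∑ w ∈ P, ∑ c : (ZMod N)ˣ, (tau S ((c : ZMod N) • w) : ℝ) ^ n := by
    rw [hT, Finset.mul_sum]
    refine Finset.sum_le_sum fun w _ => ?_
    rw [← nsmul_eq_mul, ← Finset.card_univ, ← Finset.sum_const]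
    refine Finset.sum_le_sum fun c _ => ?_
    refine pow_le_pow_left₀ (Nat.cast_nonneg _) ?_ n
    exact_mod_cast (hline w).trans (htau w c)
  have h3 : C * ((Fintype.card (ZMod N)ˣ : ℝ) * T) ≤ P.card * Fintype.card (ZMod N)ˣ * S.card :=
    (mul_le_mul_of_nonneg_left h2 hC).trans h1
  have h4 : C * T ≤ P.card * S.card := by
    refine le_of_mul_le_mul_left ?_ hU
    linarith
  calc C * (P.card : ℝ)⁻¹ * T = (C * T) / P.card := by rw [div_eq_mul_inv]; ring
    _ ≤ S.card := by rw [div_le_iff₀ hpc]; linarith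

theorem stmt0 (n r : ℕ) (hn : 1 ≤ n) (hr : 1 ≤ r)
    (p k : Fin r → ℕ) (hp : ∀ i, (p i).Prime) (hpd : Function.Injective p)
    (hk : ∀ i, 1 ≤ k i) (N : ℕ) [NeZero N] (hN : N = ∏ i, p i ^ k i)
    (P : Finset (Fin n → ZMod N)) (hP : IsProjRepSet N n P)
    (S : Finset (Fin n → ZMod N)) :
    (S.card : ℝ) ≥
      ((∏ j ∈ Finset.univ.filter (fun j : Fin r => (j : ℕ) < r - 1),
          1 / ((k j : ℝ) * Real.log (p j) + 1)) *
        ∏ i : Fin r, 1 / (2 * ((k i : ℝ) + ((⌈Real.log n / Real.log (p i)⌉ : ℤ) : ℝ)))) ^ n *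
      (P.card : ℝ)⁻¹ *
      ∑ u ∈ P, ((Finset.univ.sup fun a : Fin n → ZMod N => ((lineF a u) ∩ S).card : ℕ) : ℝ) ^ n := by
  obtain ⟨r, rfl⟩ : ∃ r', r = r' + 1 := ⟨r - 1, by omega⟩
  have h := KB_all n (by omega) r p k hp hpd hk N hN
  have hlog : ∀ i, 0 ≤ Real.log (p i) := fun i => Real.log_natCast_nonneg _
  have hlogn : 0 ≤ Real.log n := Real.log_natCast_nonneg _
  refine KB_final n N _ ?_ h P hP S
  refine pow_nonneg (mul_nonneg (Finset.prod_nonneg fun i _ => ?_)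
    (Finset.prod_nonneg fun i _ => ?_)) n
  · have := hlog i; positivity
  · have hc : (0 : ℝ) ≤ ((⌈Real.log n / Real.log (p i)⌉ : ℤ) : ℝ) := by
      exact_mod_cast Int.ceil_nonneg (div_nonneg hlogn (hlog i))
    positivity
end

section
/- Let n ≥ 1 be an integer, N = p₁^{k₁}···p_r^{k_r} with distinct primes p₁ > p₂ > ··· > p_r and kᵢ ≥ 1, let m ≥ 0 be an integer and ε ∈ [0,1]. If S ⊆ (ℤ/Nℤ)ⁿ is an (m,ε)-Kakeya set, then |S| ≥ C_{N,n} · ε · mⁿ, where C_{N,n} = ( ∏_{j=1}^{r-1} 1/(k_j·log(p_j) + 1) · ∏_{i=1}^{r} 1/(2(k_i + ⌈log_{p_i}(n)⌉)) )ⁿ and log denotes the natural logarithm. -/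
section
open Polynomial


theorem kk_single (p : ℕ) [hp : Fact p.Prime] (F : Type) [Field F] [CharP F p] (i : ℕ) (hi : 0 < i) :
    ∃ G : F[X], (1 + X) ^ i - 1 = X ^ (p ^ padicValNat p i) * G ∧ G.coeff 0 ≠ 0 := by
  obtain ⟨i', hi'⟩ : p ^ padicValNat p i ∣ i := pow_padicValNat_dvd
  set v := padicValNat p i with hv
  have hnd : ¬ p ∣ i' := by
    rintro ⟨c, rfl⟩
    have : p ^ (v + 1) ∣ i := ⟨c, by rw [hi']; ring⟩
    exact pow_succ_padicValNat_not_dvd hi.ne' this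
  have h1 : ∃ H : F[X], (1 + X) ^ i' - 1 = X * H := by
    rw [← dvd_def, X_dvd_iff]
    simp [coeff_zero_eq_eval_zero]
  obtain ⟨H, hH⟩ := h1
  have hH0 : H.coeff 0 ≠ 0 := by
    have : ((1 + X : F[X]) ^ i' - 1).coeff 1 = (X * H).coeff 1 := by rw [hH]
    rw [coeff_X_mul, coeff_sub, coeff_one_add_X_pow] at this
    simp [coeff_one] at this
    rw [← this]
    intro h
    exact hnd ((CharP.cast_eq_zero_iff F p i').1 h)
  refine ⟨H ^ p ^ v, ?_, ?_⟩
  · have : (1 + X : F[X]) ^ i - 1 = ((1 + X) ^ i' - 1) ^ p ^ v := by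
      rw [sub_pow_char_pow, one_pow, ← pow_mul, mul_comm i', ← hi']
    rw [this, hH, mul_pow]
  · rw [coeff_zero_eq_eval_zero, eval_pow, ← coeff_zero_eq_eval_zero]
    exact pow_ne_zero _ hH0

/-- cost -/
def kkCost (p g : ℕ) : ℕ := ∑ s ∈ Finset.range g, p ^ padicValNat p (g - s)

theorem kk_D (p : ℕ) [hp : Fact p.Prime] (F : Type) [Field F] [CharP F p] (g : ℕ) :
    ∃ G : F[X], ∏ s ∈ Finset.range g, ((1 + X) ^ g - (1 + X) ^ s) = X ^ (kkCost p g) * G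
      ∧ G.coeff 0 ≠ 0 := by
  have h : ∀ s : ℕ, ∃ G : F[X], s < g →
      ((1 + X) ^ g - (1 + X) ^ s = X ^ (p ^ padicValNat p (g - s)) * G ∧ G.coeff 0 ≠ 0) := by
    intro s
    by_cases hs : s < g
    · obtain ⟨G, hG, hG0⟩ := kk_single p F (g - s) (by omega)
      refine ⟨(1 + X) ^ s * G, fun _ => ⟨?_, ?_⟩⟩
      · have : (1 + X : F[X]) ^ g = (1 + X) ^ s * (1 + X) ^ (g - s) := by
          rw [← pow_add]; congr 1; omega
        rw [this, mul_left_comm, ← hG]; ring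
      · rw [mul_coeff_zero]
        refine mul_ne_zero ?_ hG0
        simp [coeff_zero_eq_eval_zero]
    · exact ⟨0, fun h => absurd h hs⟩
  choose G hG using h
  refine ⟨∏ s ∈ Finset.range g, G s, ?_, ?_⟩
  · rw [kkCost, ← Finset.prod_pow_eq_pow_sum, ← Finset.prod_mul_distrib]
    exact Finset.prod_congr rfl fun s hs => (hG s (Finset.mem_range.1 hs)).1
  · rw [coeff_zero_prod]
    exact Finset.prod_ne_zero_iff.2 fun s hs => (hG s (Finset.mem_range.1 hs)).2

theorem kk_cost_le (p : ℕ) [hp : Fact p.Prime] (l g : ℕ) (hg : g < p ^ l) : kkCost p g ≤ l * g := by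
  have h1 : kkCost p g = ∑ i ∈ Finset.Icc 1 g, p ^ padicValNat p i := by
    unfold kkCost
    refine Finset.sum_bij (fun s _ => g - s) ?_ ?_ ?_ ?_
    · intro s hs; simp at hs ⊢; omega
    · intro s hs t ht h; simp at hs ht h; omega
    · intro b hb; simp at hb; exact ⟨g - b, by simp; omega, by omega⟩
    · intro s hs; rfl
  have h2 : ∀ i ∈ Finset.Icc 1 g, p ^ padicValNat p i ≤
      ∑ a ∈ Finset.range l, if p ^ a ∣ i then p ^ a else 0 := by
    intro i hi
    simp at hi
    have hd : p ^ padicValNat p i ∣ i := pow_padicValNat_dvd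
    have hlt : padicValNat p i < l := by
      have := Nat.le_of_dvd (by omega) hd
      exact (Nat.pow_lt_pow_iff_right hp.out.one_lt).1 (by omega)
    calc p ^ padicValNat p i = if p ^ padicValNat p i ∣ i then p ^ padicValNat p i else 0 := by simp [hd]
      _ ≤ _ := Finset.single_le_sum (f := fun a => if p ^ a ∣ i then p ^ a else 0)
        (fun _ _ => Nat.zero_le _) (Finset.mem_range.2 hlt)
  rw [h1]
  refine (Finset.sum_le_sum h2).trans ?_
  rw [Finset.sum_comm]
  have h3 : ∀ a ∈ Finset.range l, (∑ i ∈ Finset.Icc 1 g, if p ^ a ∣ i then p ^ a else 0) ≤ g := by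
    intro a _
    rw [← Finset.sum_filter, Finset.sum_const, smul_eq_mul]
    have : (Finset.filter (fun i => p ^ a ∣ i) (Finset.Icc 1 g)).card = g / p ^ a := by
      have := Nat.Ioc_filter_dvd_card_eq_div g (p ^ a)
      rw [← this]; rfl
    rw [this]
    exact Nat.div_mul_le_self _ _
  refine (Finset.sum_le_sum h3).trans ?_
  simp

/-- level -/
def kkLev (p : ℕ) {n q : ℕ} (i0 : Fin n) (b : Fin n → Fin q) : ℕ :=
  (b i0 : ℕ) + ∑ i ∈ Finset.univ.erase i0, kkCost p (b i)

/-- direction -/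
def kkDir {n q : ℕ} (i0 : Fin n) (b : Fin n → Fin q) (i : Fin n) : ℕ :=
  if i = i0 then 1 else (b i : ℕ)

theorem kk_indep (p : ℕ) [hp : Fact p.Prime] (F : Type) [Field F] [CharP F p] {n q : ℕ} (i0 : Fin n)
    (c : (Fin n → Fin q) → F)
    (h : ∀ v : Fin n → ℕ, ∑ b, c b * (Nat.choose (∑ i, kkDir i0 b i * v i) (kkLev p i0 b) : F) = 0) :
    c = 0 := by
  have hf : ∀ f : MvPolynomial (Fin n) F, ∑ b, c b *
      ((MvPolynomial.aeval (fun i => (1 + X : F[X]) ^ (kkDir i0 b i)) f).coeff (kkLev p i0 b)) = 0 := by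
    intro f
    induction f using MvPolynomial.induction_on' with
    | monomial v a =>
      have := congrArg (a * ·) (h v)
      simp only [mul_zero] at this
      rw [← this, Finset.mul_sum]
      refine Finset.sum_congr rfl fun b _ => ?_
      rw [MvPolynomial.aeval_monomial, Finsupp.prod_fintype _ _ (by simp)]
      simp only [← pow_mul]
      rw [Finset.prod_pow_eq_pow_sum, ← Polynomial.C_eq_algebraMap, coeff_C_mul, coeff_one_add_X_pow]
      ring
    | add f g hf hg =>
      simp only [map_add, coeff_add, mul_add, Finset.sum_add_distrib, hf, hg, add_zero]
  classical
  by_contra hc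
  have hne : (Finset.univ.filter fun b => c b ≠ 0).Nonempty := by
    obtain ⟨b, hb⟩ := Function.ne_iff.1 hc
    exact ⟨b, by simpa using hb⟩
  obtain ⟨β, hβ, hmax⟩ := Finset.exists_max_image _
    (fun b : Fin n → Fin q => (∑ i ∈ Finset.univ.erase i0, (b i : ℕ)) * q + (b i0 : ℕ)) hne
  simp only [Finset.mem_filter, Finset.mem_univ, true_and] at hβ hmax
  have hF := hf ((MvPolynomial.X i0 - 1) ^ (β i0 : ℕ) *
    ∏ i ∈ Finset.univ.erase i0, ∏ s ∈ Finset.range (β i), (MvPolynomial.X i - MvPolynomial.X i0 ^ s))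
  have hev : ∀ b : Fin n → Fin q,
    MvPolynomial.aeval (fun i => (1 + X : F[X]) ^ (kkDir i0 b i)) ((MvPolynomial.X i0 - 1) ^ (β i0 : ℕ) *
    ∏ i ∈ Finset.univ.erase i0, ∏ s ∈ Finset.range (β i), (MvPolynomial.X i - MvPolynomial.X i0 ^ s) : MvPolynomial (Fin n) F)
    = X ^ (β i0 : ℕ) * ∏ i ∈ Finset.univ.erase i0, ∏ s ∈ Finset.range (β i), ((1 + X) ^ (b i : ℕ) - (1 + X) ^ s) := by
    intro b
    simp only [map_mul, map_pow, map_sub, map_one, map_prod, MvPolynomial.aeval_X]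
    congr 1
    · simp [kkDir]
    · refine Finset.prod_congr rfl fun i hi => Finset.prod_congr rfl fun s _ => ?_
      have : i ≠ i0 := by simpa using hi
      simp [kkDir, this]
  choose G hG hG0 using kk_D p F
  have hβe : X ^ (β i0 : ℕ) * ∏ i ∈ Finset.univ.erase i0, ∏ s ∈ Finset.range (β i), ((1 + X : F[X]) ^ (β i : ℕ) - (1 + X) ^ s)
     = X ^ (kkLev p i0 β) * ∏ i ∈ Finset.univ.erase i0, G (β i) := by
    rw [Finset.prod_congr rfl fun i _ => hG (β i), Finset.prod_mul_distrib, Finset.prod_pow_eq_pow_sum,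
      ← mul_assoc, ← pow_add]; rfl
  rw [Finset.sum_eq_single β] at hF
  · rw [hev, hβe, coeff_X_pow_mul', if_pos le_rfl, Nat.sub_self, coeff_zero_prod] at hF
    rcases mul_eq_zero.1 hF with h | h
    · exact hβ h
    · exact Finset.prod_ne_zero_iff.2 (fun i _ => hG0 (β i)) h
  · intro b _ hb
    by_cases hcb : c b = 0
    · simp [hcb]
    rw [hev]
    by_cases hlt : ∃ i ∈ Finset.univ.erase i0, (b i : ℕ) < β i
    · obtain ⟨i, hi, hlt⟩ := hlt
      rw [Finset.prod_eq_zero hi (Finset.prod_eq_zero (Finset.mem_range.2 hlt) (sub_self _))]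
      simp
    · push Not at hlt
      have hm := hmax b hcb
      have hsum : ∑ i ∈ Finset.univ.erase i0, (β i : ℕ) ≤ ∑ i ∈ Finset.univ.erase i0, (b i : ℕ) :=
        Finset.sum_le_sum hlt
      have hbq := (b i0).2
      have hβq := (β i0).2
      have hse : ∑ i ∈ Finset.univ.erase i0, (β i : ℕ) = ∑ i ∈ Finset.univ.erase i0, (b i : ℕ) := by
        by_contra hne
        have : (∑ i ∈ Finset.univ.erase i0, (β i : ℕ)) + 1 ≤ ∑ i ∈ Finset.univ.erase i0, (b i : ℕ) := by omega
        have := Nat.mul_le_mul_right q this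
        rw [add_mul] at this
        omega
      have heq := (Finset.sum_eq_sum_iff_of_le hlt).1 hse
      rw [hse] at hm
      have h0 : (b i0 : ℕ) < β i0 := by
        refine lt_of_le_of_ne (by omega) fun h0 => hb ?_
        funext i
        by_cases hi : i = i0
        · subst hi; exact Fin.ext h0
        · exact Fin.ext (heq i (by simp [hi])).symm
      have : ∏ i ∈ Finset.univ.erase i0, ∏ s ∈ Finset.range (β i), ((1 + X : F[X]) ^ (b i : ℕ) - (1 + X) ^ s)
        = ∏ i ∈ Finset.univ.erase i0, ∏ s ∈ Finset.range (β i), ((1 + X) ^ (β i : ℕ) - (1 + X) ^ s) :=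
        Finset.prod_congr rfl fun i hi => by rw [heq i hi]
      rw [this, hβe, coeff_X_pow_mul', if_neg, mul_zero]
      have : ∑ i ∈ Finset.univ.erase i0, kkCost p (b i) = ∑ i ∈ Finset.univ.erase i0, kkCost p (β i) :=
        Finset.sum_congr rfl fun i hi => by rw [heq i hi]
      unfold kkLev
      omega
  · simp

theorem kk_lev_le (p : ℕ) [hp : Fact p.Prime] {n l : ℕ} (hl : 1 ≤ l) (i0 : Fin n) (b : Fin n → Fin (p ^ l)) :
    kkLev p i0 b ≤ l * ∑ i, (b i : ℕ) := by
  rw [← Finset.add_sum_erase _ _ (Finset.mem_univ i0), mul_add, Finset.mul_sum]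
  refine add_le_add (Nat.le_mul_of_pos_left _ hl) (Finset.sum_le_sum fun i _ => kk_cost_le p l _ (b i).2)


theorem kk_choose_mod (p : ℕ) [hp : Fact p.Prime] (F : Type) [Field F] [CharP F p] (l a j : ℕ)
    (hj : j < p ^ l) : (Nat.choose a j : F) = (Nat.choose (a % p ^ l) j : F) := by
  rw [← coeff_one_add_X_pow, ← coeff_one_add_X_pow]
  have h1 : (1 + X : F[X]) ^ a = (1 + X ^ p ^ l) ^ (a / p ^ l) * (1 + X) ^ (a % p ^ l) := by
    conv_lhs => rw [← Nat.div_add_mod a (p ^ l), pow_add, pow_mul, add_pow_char_pow, one_pow]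
  have h2 : (X ^ p ^ l : F[X]) ∣ (1 + X ^ p ^ l) ^ (a / p ^ l) - 1 := by
    have := sub_dvd_pow_sub_pow (1 + X ^ p ^ l : F[X]) 1 (a / p ^ l)
    simpa using this
  obtain ⟨Q, hQ⟩ := h2
  have h3 : (1 + X : F[X]) ^ a = (1 + X) ^ (a % p ^ l) + X ^ p ^ l * (Q * (1 + X) ^ (a % p ^ l)) := by
    rw [h1, ← mul_assoc, ← hQ]; ring
  rw [h3, coeff_add, coeff_X_pow_mul', if_neg (by omega), add_zero]

/-- multi-indices of order less than n -/
def kkA (n d : ℕ) : Finset (Fin n → ℕ) :=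
  (Fintype.piFinset (fun _ : Fin n => Finset.range d)).filter (fun α => ∑ i, α i < d)

theorem kk_mem_A (n d : ℕ) (α : Fin n → ℕ) : α ∈ kkA n d ↔ ∑ i, α i < d := by
  simp only [kkA, Finset.mem_filter, Fintype.mem_piFinset, Finset.mem_range, and_iff_right_iff_imp]
  intro h i
  exact lt_of_le_of_lt (Finset.single_le_sum (f := α) (fun _ _ => Nat.zero_le _) (Finset.mem_univ i)) h

/-- evaluation row -/
def kkE {O : Type} [CommRing O] {n : ℕ} (c : Fin n → O) (α v : Fin n → ℕ) : O :=
  ∏ i, ((Nat.choose (v i) (α i) : O) * c i ^ (v i - α i))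

theorem kk_vanish {O : Type} [CommRing O] {n M : ℕ} (V : Type) [Fintype V] (vv : V → Fin n → ℕ)
    (hvv : ∀ v i, vv v i < M) (f : V → O) (c : Fin n → O) (z : O) (y : Fin n → O[X])
    (hy : ∀ i, (y i).eval z = c i) (d : ℕ)
    (h : ∀ α ∈ kkA n d, ∑ v, f v * kkE c α (vv v) = 0) :
    (X - C z) ^ d ∣ ∑ v, C (f v) * ∏ i, y i ^ vv v i := by
  have h1 : ∀ v, ∏ i, y i ^ vv v i =
      ∑ α ∈ Fintype.piFinset (fun _ : Fin n => Finset.range M),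
        (∏ i, (y i - C (c i)) ^ α i) * C (kkE c α (vv v)) := by
    intro v
    have h2 : ∀ i, y i ^ vv v i = ∑ a ∈ Finset.range M,
        (y i - C (c i)) ^ a * (C ((Nat.choose (vv v i) a : O) * c i ^ (vv v i - a))) := by
      intro i
      conv_lhs => rw [show y i = (y i - C (c i)) + C (c i) by ring]
      rw [add_pow]
      have hsub : Finset.range (vv v i + 1) ⊆ Finset.range M :=
        Finset.range_subset_range.2 (hvv v i)
      rw [← Finset.sum_subset hsub]
      · refine Finset.sum_congr rfl fun a _ => ?_
        simp only [C_mul, C_pow, map_natCast]; ring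
      · intro a _ ha
        rw [Nat.choose_eq_zero_of_lt (by simpa using ha)]
        simp
    rw [Finset.prod_congr rfl fun i _ => h2 i, Finset.prod_univ_sum]
    refine Finset.sum_congr rfl fun α _ => ?_
    rw [Finset.prod_mul_distrib, kkE, map_prod]
  simp_rw [h1, Finset.mul_sum]
  rw [Finset.sum_comm]
  refine Finset.dvd_sum fun α _ => ?_
  have h3 : ∑ v, C (f v) * ((∏ i, (y i - C (c i)) ^ α i) * C (kkE c α (vv v))) =
      (∏ i, (y i - C (c i)) ^ α i) * C (∑ v, f v * kkE c α (vv v)) := by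
    rw [map_sum, Finset.mul_sum]
    refine Finset.sum_congr rfl fun v _ => ?_
    rw [C_mul]; ring
  rw [h3]
  by_cases hα : α ∈ kkA n d
  · rw [h α hα]; simp
  · rw [kk_mem_A, not_lt] at hα
    refine Dvd.dvd.mul_right ?_ _
    refine (pow_dvd_pow _ hα).trans ?_
    rw [← Finset.prod_pow_eq_pow_sum]
    refine Finset.prod_dvd_prod_of_dvd _ _ fun i _ => pow_dvd_pow_of_dvd ?_ _
    rw [dvd_iff_isRoot]
    simp [hy]

theorem kk_dvd_prod {O : Type} [CommRing O] [IsDomain O] {T : Type} (s : Finset T) (z : T → O)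
    (hz : Set.InjOn z s) (d : ℕ) (f : O[X]) (h : ∀ t ∈ s, (X - C (z t)) ^ d ∣ f) :
    ∏ t ∈ s, (X - C (z t)) ^ d ∣ f := by
  classical
  by_cases hf : f = 0
  · simp [hf]
  have e : ∏ t ∈ s, (X - C (z t)) ^ d = ((d • (s.val.map z)).map fun a => X - C a).prod := by
    rw [Multiset.map_nsmul, Multiset.prod_nsmul, Multiset.map_map, Finset.prod_pow]; rfl
  rw [e, Multiset.prod_X_sub_C_dvd_iff_le_roots hf, Multiset.le_iff_count]
  intro a
  rw [Multiset.count_nsmul, count_roots]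
  by_cases ha : a ∈ s.val.map z
  · obtain ⟨t, ht, rfl⟩ := Multiset.mem_map.1 ha
    have hnd : (s.val.map z).Nodup := Multiset.Nodup.map_on (fun x hx y hy h => hz hx hy h) s.nodup
    rw [Multiset.count_eq_one_of_mem hnd ha, mul_one, le_rootMultiplicity_iff hf]
    exact h t ht
  · rw [Multiset.count_eq_zero_of_notMem ha]; simp

theorem kk_taylor {F : Type} [Field F] (A D j : ℕ) (hj : j < D) :
    (taylor 1 ((X ^ A : F[X]) %ₘ (X - 1) ^ D)).coeff j = (Nat.choose A j : F) := by
  have hm : ((X - 1 : F[X]) ^ D).Monic := by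
    have := (monic_X_sub_C (1 : F)).pow D
    simpa using this
  have h := congrArg (fun P => (taylor 1 P).coeff j) (modByMonic_add_div (X ^ A : F[X]) ((X - 1 : F[X]) ^ D))
  simp only [map_add, taylor_mul, taylor_pow, taylor_X, map_sub, taylor_one, coeff_add, C_1, add_sub_cancel_right] at h
  rw [coeff_X_pow_mul', if_neg (by omega), add_zero] at h
  rw [h, add_comm X 1, coeff_one_add_X_pow]

theorem kk_rank0 (p : ℕ) [hp : Fact p.Prime] (k l n : ℕ) (hkl : n * p ^ k ≤ p ^ l) (O F : Type)
    [CommRing O] [IsDomain O] [Field F] [CharP F p] (π : O →+* F) (hπ : Function.Surjective π)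
    (ζ : O) (hζ : IsPrimitiveRoot ζ (p ^ k)) (hζ1 : π ζ = 1)
    (cst : ZMod (p ^ l) →+* ZMod (p ^ k))
    (S : Finset (Fin n → ZMod (p ^ k))) (ι : Type) [Fintype ι] (u : ι → Fin n → ZMod (p ^ l)) (j : ι → ℕ)
    (hind : ∀ c : ι → F, (∀ v : Fin n → ZMod (p ^ l), ∑ b, c b * (Nat.choose (u b ⬝ᵥ v).val (j b) : F) = 0) → c = 0)
    (hline : ∀ b, ∃ a : Fin n → ZMod (p ^ k), ∃ T : Finset (ZMod (p ^ k)), j b < n * T.card ∧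
      ∀ t ∈ T, a + t • (fun i => cst (u b i)) ∈ S) :
    Fintype.card ι ≤ (kkA n n).card * S.card := by
  classical
  have : NeZero (p ^ l) := ⟨pow_ne_zero _ hp.out.ne_zero⟩
  have : NeZero (p ^ k) := ⟨pow_ne_zero _ hp.out.ne_zero⟩
  choose a T hj hT using hline
  let V := Fin n → ZMod (p ^ l)
  let vv : V → Fin n → ℕ := fun v i => (v i).val
  let y : ι → Fin n → O[X] := fun b i => C (ζ ^ (a b i).val) * X ^ (u b i).val
  let P : ι → O[X] := fun b => ∏ t ∈ T b, (X - C (ζ ^ t.val)) ^ n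
  have hPm : ∀ b, (P b).Monic := fun b => monic_prod_of_monic _ _ fun t _ => (monic_X_sub_C _).pow _
  let lam : ι → O[X] →ₗ[O] O := fun b =>
    (lcoeff O (j b)) ∘ₗ (taylor 1) ∘ₗ (modByMonicHom (P b))
  let Φ : Matrix ι V O := fun b v => lam b (∏ i, y b i ^ vv v i)
  have hzpow : ∀ (m m' : ℕ), ((m : ℕ) : ZMod (p ^ k)) = m' → ζ ^ m = ζ ^ m' := by
    intro m m' h
    rw [ZMod.natCast_eq_natCast_iff'] at h
    rw [← Nat.div_add_mod m (p ^ k), ← Nat.div_add_mod m' (p ^ k), h, pow_add, pow_mul, hζ.pow_eq_one,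
      pow_add, pow_mul, hζ.pow_eq_one]
    simp
  have hTk : ∀ b, n * (T b).card ≤ p ^ l := by
    intro b
    refine le_trans (Nat.mul_le_mul_left n ?_) hkl
    have := Finset.card_le_univ (T b)
    rwa [ZMod.card] at this
  have hred : ∀ b v, π (Φ b v) = (Nat.choose (u b ⬝ᵥ v).val (j b) : F) := by
    intro b v
    have hPmap : (P b).map π = (X - 1) ^ (n * (T b).card) := by
      simp [P, Polynomial.map_prod, hζ1, pow_mul]
    have : π (Φ b v) = (taylor 1 (((∏ i, y b i ^ vv v i).map π) %ₘ ((P b).map π))).coeff (j b) := by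
      rw [← map_modByMonic _ (hPm b)]
      show π ((taylor 1 ((∏ i, y b i ^ vv v i) %ₘ P b)).coeff (j b)) = _
      rw [← coeff_map, Polynomial.map_taylor, map_one]
    rw [this, hPmap]
    have hm : (∏ i, y b i ^ vv v i).map π = X ^ (∑ i, (u b i).val * (v i).val) := by
      simp [y, vv, Polynomial.map_prod, hζ1, ← pow_mul, Finset.prod_pow_eq_pow_sum]
    rw [hm, kk_taylor _ _ _ (hj b), kk_choose_mod p F l _ _ (lt_of_lt_of_le (hj b) (hTk b))]
    congr 2
    rw [← ZMod.val_natCast]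
    congr 1
    simp [dotProduct]
  -- right inverse
  have hΦ : ∃ R : Matrix V ι O, (Φ * R).det ≠ 0 := by
    let φ : Matrix ι V F := Φ.map π
    have hinj : Function.Injective φ.vecMul := by
      rw [← Matrix.coe_vecMulLinear, injective_iff_map_eq_zero]
      intro c hc
      refine hind c fun v => ?_
      have := congrFun hc v
      simpa [Matrix.vecMul, dotProduct, φ, hred] using this
    obtain ⟨R, hR⟩ : ∃ R : Matrix V ι F, φ * R = 1 := by
      rw [← Matrix.mulVec_surjective_iff_exists_right_inverse]
      have h1 : LinearIndependent F φ.row := Matrix.vecMul_injective_iff.1 hinj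
      have h2 := h1.rank_matrix
      rw [Matrix.rank] at h2
      have := LinearMap.range_eq_top.1 (Submodule.eq_top_of_finrank_eq (K := F) (V := ι → F) (S := LinearMap.range φ.mulVecLin) (by rw [h2]; simp))
      exact this
    choose s hs using hπ
    refine ⟨R.map s, fun h0 => ?_⟩
    have h1 : π ((Φ * R.map s).det) = (φ * R).det := by
      rw [RingHom.map_det]
      congr 1
      ext b b'
      simp [Matrix.mul_apply, φ, hs]
    rw [h0, hR] at h1
    simp at h1
  obtain ⟨R, hR⟩ := hΦ
  let E : Matrix (S × kkA n n) V O := fun r v => kkE (fun i => ζ ^ (r.1.1 i).val) r.2.1 (vv v)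
  have hker : ∀ f : V → O, E.mulVec f = 0 → Φ.mulVec f = 0 := by
    intro f hf
    funext b
    have h1 : (Φ.mulVec f) b = lam b (∑ v, C (f v) * ∏ i, y b i ^ vv v i) := by
      rw [map_sum]
      refine Finset.sum_congr rfl fun v _ => ?_
      rw [C_mul', map_smul, smul_eq_mul, mul_comm]
    have h2 : P b ∣ ∑ v, C (f v) * ∏ i, y b i ^ vv v i := by
      refine kk_dvd_prod (T b) (fun t => ζ ^ t.val) ?_ n _ ?_
      · intro t _ t' _ h
        exact ZMod.val_injective _ (hζ.pow_inj (ZMod.val_lt t) (ZMod.val_lt t') h)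
      · intro t ht
        refine kk_vanish (M := p ^ l) V vv (fun v i => ZMod.val_lt _) f
          (fun i => ζ ^ ((a b + t • (fun i => cst (u b i))) i).val) _ _ ?_ n ?_
        · intro i
          simp only [y, eval_mul, eval_C, eval_pow, eval_X, ← pow_mul, ← pow_add]
          refine hzpow _ _ ?_
          have : cst (u b i) = ((u b i).val : ZMod (p ^ k)) := by
            conv_lhs => rw [← ZMod.natCast_zmod_val (u b i)]
            rw [map_natCast]
          simp [this]
        · intro α hα
          have := congrFun hf (⟨_, hT b t ht⟩, ⟨α, hα⟩)
          simp only [Matrix.mulVec, dotProduct, E] at this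
          rw [← Pi.zero_apply (ι := (S × kkA n n)) (M := fun _ => O) (⟨_, hT b t ht⟩, ⟨α, hα⟩), ← this]
          exact Finset.sum_congr rfl fun v _ => mul_comm _ _
    rw [h1]
    show (taylor 1 (_ %ₘ P b)).coeff (j b) = 0
    rw [(modByMonic_eq_zero_iff_dvd (hPm b)).2 h2]
    simp
  have hinj : Function.Injective (E * R).mulVecLin := by
    rw [injective_iff_map_eq_zero]
    intro x hx
    rw [Matrix.mulVecLin_apply, ← Matrix.mulVec_mulVec] at hx
    have := hker _ hx
    rw [Matrix.mulVec_mulVec] at this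
    exact Matrix.eq_zero_of_mulVec_eq_zero hR this
  have := card_le_of_injective O _ hinj
  rw [Fintype.card_prod, Fintype.card_coe, Fintype.card_coe] at this
  rw [mul_comm]; exact this

theorem kk_ring (p : ℕ) [hp : Fact p.Prime] (k : ℕ) : ∃ (O F : Type) (_ : CommRing O) (_ : IsDomain O)
    (_ : Field F) (_ : CharP F p) (π : O →+* F) (ζ : O), Function.Surjective π ∧
      IsPrimitiveRoot ζ (p ^ k) ∧ π ζ = 1 := by
  have hk0 : p ^ k ≠ 0 := pow_ne_zero _ hp.out.ne_zero
  let O := integralClosure ℤ ℂ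
  have hz := Complex.isPrimitiveRoot_exp (p ^ k) hk0
  have hint : IsIntegral ℤ (Complex.exp (2 * Real.pi * Complex.I / ((p ^ k : ℕ) : ℂ))) :=
    hz.isIntegral (Nat.pos_of_ne_zero hk0)
  let ζ : O := ⟨_, hint⟩
  have hζ : IsPrimitiveRoot ζ (p ^ k) :=
    IsPrimitiveRoot.of_map_of_injective (f := O.val) hz Subtype.val_injective
  have hnu : ¬ IsUnit (p : O) := by
    intro h
    obtain ⟨x, hx⟩ := h.exists_right_inv
    have hx' : (p : ℂ) * (x : ℂ) = 1 := by
      have := congrArg (fun z : O => (z : ℂ)) hx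
      simpa using this
    have hp0 : (p : ℂ) ≠ 0 := by exact_mod_cast hp.out.ne_zero
    have hxq : (x : ℂ) = algebraMap ℚ ℂ ((p : ℚ)⁻¹) := by
      simp; field_simp; rw [mul_comm]; exact hx'
    have h1 : IsIntegral ℤ (algebraMap ℚ ℂ ((p : ℚ)⁻¹)) := hxq ▸ x.2
    have h2 : IsIntegral ℤ ((p : ℚ)⁻¹) := (isIntegral_algebraMap_iff (algebraMap ℚ ℂ).injective).1 h1
    obtain ⟨m, hm⟩ := IsIntegrallyClosed.isIntegral_iff.1 h2
    have hpq : (p : ℚ) ≠ 0 := by exact_mod_cast hp.out.ne_zero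
    have : (p : ℤ) * m = 1 := by
      have : (p : ℚ) * m = 1 := by
        have hm' : (m : ℚ) = (p : ℚ)⁻¹ := by simpa using hm
        rw [hm']; field_simp
      exact_mod_cast this
    have h3 : IsUnit (p : ℤ) := IsUnit.of_mul_eq_one _ this
    exact (Nat.prime_iff_prime_int.1 hp.out).not_isUnit h3
  obtain ⟨I, hI, hle⟩ := Ideal.exists_le_maximal (Ideal.span {(p : O)}) (by
    rwa [Ne, Ideal.span_singleton_eq_top])
  let : Field (O ⧸ I) := Ideal.Quotient.field I
  have hpI : ((p : ℕ) : O ⧸ I) = 0 := by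
    have : (p : O) ∈ I := hle (Ideal.mem_span_singleton_self _)
    have := Ideal.Quotient.eq_zero_iff_mem.2 this
    simpa using this
  have hch : CharP (O ⧸ I) p := ringChar.of_eq (CharP.ringChar_of_prime_eq_zero hp.out hpI)
  refine ⟨O, O ⧸ I, inferInstance, inferInstance, inferInstance, hch, Ideal.Quotient.mk I, ζ,
    Ideal.Quotient.mk_surjective, hζ, ?_⟩
  have h1 : (Ideal.Quotient.mk I ζ) ^ p ^ k = 1 := by
    rw [← map_pow, hζ.pow_eq_one, map_one]
  have h2 : (Ideal.Quotient.mk I ζ - 1) ^ p ^ k = 0 := by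
    rw [sub_pow_char_pow, h1, one_pow, sub_self]
  exact sub_eq_zero.1 (pow_eq_zero_iff hk0 |>.1 h2)


theorem kk_card_A (n : ℕ) : ∀ d, 0 < n + d → (kkA n d).card = Nat.multichoose d n := by
  induction n with
  | zero =>
    intro d hd
    rw [Nat.multichoose_zero_right]
    cases d with
    | zero => omega
    | succ d =>
      rw [Finset.card_eq_one]
      refine ⟨fun _ => 0, ?_⟩
      ext α
      rw [kk_mem_A]
      simp [funext_iff]
  | succ n ihn =>
    intro d _
    induction d with
    | zero =>
      rw [Nat.multichoose_zero_succ, Finset.card_eq_zero]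
      ext α
      rw [kk_mem_A]; simp
    | succ d ihd =>
      rw [Nat.multichoose_succ_succ, ← ihd (by omega), ← ihn _ (by omega)]
      have e : kkA (n + 1) (d + 1) =
          (kkA (n + 1) d).image (fun α => Fin.cons (α 0 + 1) (Fin.tail α)) ∪
          (kkA n (d + 1)).image (fun α => (Fin.cons 0 α : Fin (n + 1) → ℕ)) := by
        ext α
        simp only [Finset.mem_union, Finset.mem_image, kk_mem_A, Fin.sum_univ_succ]
        constructor
        · intro h
          by_cases h0 : α 0 = 0
          · right
            refine ⟨Fin.tail α, by simp only [Fin.tail]; omega, ?_⟩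
            rw [← h0, Fin.cons_self_tail]
          · left
            refine ⟨Fin.cons (α 0 - 1) (Fin.tail α), by simp [Fin.tail]; omega, ?_⟩
            simp only [Fin.cons_zero, Fin.tail_cons]
            rw [Nat.sub_add_cancel (by omega), Fin.cons_self_tail]
        · rintro (⟨β, h, rfl⟩ | ⟨β, h, rfl⟩)
          · simp [Fin.tail]; omega
          · simp; omega
      rw [e, Finset.card_union_of_disjoint, Finset.card_image_of_injective, Finset.card_image_of_injective]
      · intro a b h
        exact Fin.cons_right_injective _ h
      · intro a b h
        have h0 := congrFun h 0
        have h1 := congrArg Fin.tail h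
        simp at h0 h1
        rw [← Fin.cons_self_tail a, ← Fin.cons_self_tail b, h0, h1]
      · rw [Finset.disjoint_left]
        intro α h1 h2
        simp only [Finset.mem_image] at h1 h2
        obtain ⟨a, _, rfl⟩ := h1
        obtain ⟨b, _, h⟩ := h2
        have := congrFun h 0
        simp at this

theorem kk_count (n d s l : ℕ) (hn : 1 ≤ n) (hl : 1 ≤ l) (hd : n * s ≤ l * d) :
    ((kkA n n).card : ℝ) * ((s : ℝ) * (1 / (2 * l))) ^ n ≤ ((kkA n d).card : ℝ) := by
  have h1 : n.factorial * (kkA n n).card ≤ (2 * n) ^ n := by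
    rw [kk_card_A _ _ (by omega), Nat.multichoose_eq, ← Nat.ascFactorial_eq_factorial_mul_choose']
    obtain ⟨m, rfl⟩ : ∃ m, n = m + 1 := ⟨n - 1, by omega⟩
    exact (Nat.ascFactorial_le_pow_add m (m + 1)).trans (Nat.pow_le_pow_left (by omega) _)
  have h2 : d ^ n ≤ n.factorial * (kkA n d).card := by
    rw [kk_card_A _ _ (by omega), Nat.multichoose_eq, ← Nat.ascFactorial_eq_factorial_mul_choose']
    exact Nat.pow_succ_le_ascFactorial _ _
  have h1' : (n.factorial : ℝ) * (kkA n n).card ≤ (2 * n) ^ n := by exact_mod_cast h1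
  have h2' : (d : ℝ) ^ n ≤ n.factorial * (kkA n d).card := by exact_mod_cast h2
  have hd' : (n : ℝ) * s ≤ l * d := by exact_mod_cast hd
  have hf : (0 : ℝ) < n.factorial := by exact_mod_cast n.factorial_pos
  have hl0 : (0 : ℝ) < l := by exact_mod_cast hl
  refine le_of_mul_le_mul_left ?_ hf
  refine le_trans ?_ h2'
  rw [← mul_assoc]
  refine (mul_le_mul_of_nonneg_right h1' (by positivity)).trans ?_
  rw [← mul_pow]
  refine pow_le_pow_left₀ (by positivity) ?_ _
  have : 2 * (n : ℝ) * (s * (1 / (2 * l))) = n * s / l := by field_simp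
  rw [this, div_le_iff₀ hl0]
  linarith

open Classical in
/-- primitive vectors -/
noncomputable def kkPrim (R : Type) [CommRing R] [Fintype R] (n : ℕ) : Finset (Fin n → R) :=
  Finset.univ.filter fun u => ∃ v : Fin n → R, ∑ i, v i * u i = 1

theorem kk_mem_prim {R : Type} [CommRing R] [Fintype R] {n : ℕ} (u : Fin n → R) :
    u ∈ kkPrim R n ↔ ∃ v : Fin n → R, ∑ i, v i * u i = 1 := by
  simp [kkPrim]

theorem kk_unit_coord (p : ℕ) [hp : Fact p.Prime] (k n : ℕ) (hk : 1 ≤ k) (u : Fin n → ZMod (p ^ k))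
    (hu : ∃ v : Fin n → ZMod (p ^ k), ∑ i, v i * u i = 1) : ∃ i, (u i).val.Coprime p := by
  have : NeZero (p ^ k) := ⟨pow_ne_zero _ hp.out.ne_zero⟩
  obtain ⟨v, hv⟩ := hu
  by_contra! h
  have h' : ∀ i, p ∣ (u i).val := by
    intro i
    by_contra hd
    exact h i ((Nat.Prime.coprime_iff_not_dvd hp.out).2 hd).symm
  let f := ZMod.castHom (dvd_pow_self p (by omega : k ≠ 0)) (ZMod p)
  have h0 : ∀ i, f (u i) = 0 := by
    intro i
    rw [← ZMod.natCast_zmod_val (u i), map_natCast]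
    exact (ZMod.natCast_eq_zero_iff _ _).2 (h' i)
  have := congrArg f hv
  simp [map_sum, h0] at this

theorem kk_trans (p : ℕ) [hp : Fact p.Prime] (k l n : ℕ) (hk : 1 ≤ k) (i0 : Fin n)
    (cst : ZMod (p ^ l) →+* ZMod (p ^ k)) (u : Fin n → ZMod (p ^ k))
    (hu : ∃ v : Fin n → ZMod (p ^ k), ∑ i, v i * u i = 1) :
    ∃ g : (Matrix (Fin n) (Fin n) (ZMod (p ^ l)))ˣ,
      (fun i => cst ((g : Matrix (Fin n) (Fin n) (ZMod (p ^ l))).mulVec (Pi.single i0 1) i)) = u := by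
  have : NeZero (p ^ k) := ⟨pow_ne_zero _ hp.out.ne_zero⟩
  obtain ⟨i, hi⟩ := kk_unit_coord p k n hk u hu
  let u' : Fin n → ZMod (p ^ l) := fun i => ((u i).val : ZMod (p ^ l))
  let A : Matrix (Fin n) (Fin n) (ZMod (p ^ l)) :=
    (Matrix.updateCol 1 i u').submatrix id (Equiv.swap i0 i)
  have hdet : IsUnit A.det := by
    rw [Matrix.det_permute', ← Matrix.cramer_apply, Matrix.cramer_one]
    refine IsUnit.mul ?_ ?_
    · exact (Units.isUnit (Equiv.Perm.sign (Equiv.swap i0 i))).map (Int.castRingHom (ZMod (p ^ l)))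
    · exact (ZMod.isUnit_iff_coprime _ _).2 (Nat.Coprime.pow_right l hi)
  have hA : IsUnit A := (Matrix.isUnit_iff_isUnit_det A).2 hdet
  refine ⟨hA.unit, ?_⟩
  funext t
  rw [IsUnit.unit_spec, Matrix.mulVec_single_one]
  simp [A, Matrix.col_apply, u']

theorem kk_pack (p : ℕ) [hp : Fact p.Prime] (k n e : ℕ) (hk : 1 ≤ k) (hn : 1 ≤ n) (hne : n ≤ p ^ e)
    [Fintype (ZMod (p ^ k))] :
    ∃ (Γ B : Type) (_ : Fintype Γ) (_ : Nonempty Γ) (_ : Fintype B) (j : B → ℕ)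
      (w : Γ → B → Fin n → ZMod (p ^ k)),
      (∀ g b, w g b ∈ kkPrim (ZMod (p ^ k)) n) ∧
      (∀ b, ∀ h : (Fin n → ZMod (p ^ k)) → ℝ, ((kkPrim (ZMod (p ^ k)) n).card : ℝ) * ∑ g, h (w g b) =
        (Fintype.card Γ : ℝ) * ∑ u ∈ kkPrim (ZMod (p ^ k)) n, h u) ∧
      (∀ (S : Finset (Fin n → ZMod (p ^ k))) (g : Γ) (B' : Finset B),
        (∀ b ∈ B', ∃ a : Fin n → ZMod (p ^ k), ∃ T : Finset (ZMod (p ^ k)), j b < n * T.card ∧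
          ∀ t ∈ T, a + t • w g b ∈ S) → B'.card ≤ (kkA n n).card * S.card) ∧
      (∀ s ≤ p ^ k, ((kkA n n).card : ℝ) * ((s : ℝ) * (1 / (2 * ((k + e : ℕ) : ℝ)))) ^ n ≤
        ((Finset.univ.filter fun b => j b < n * s).card : ℝ)) := by
  classical
  have hk0 : NeZero (p ^ k) := ⟨pow_ne_zero _ hp.out.ne_zero⟩
  set l := k + e with hl
  have hl0 : NeZero (p ^ l) := ⟨pow_ne_zero _ hp.out.ne_zero⟩
  have hkl : n * p ^ k ≤ p ^ l := by
    rw [hl, pow_add, mul_comm]; exact Nat.mul_le_mul_left _ hne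
  let i0 : Fin n := ⟨0, hn⟩
  let cst : ZMod (p ^ l) →+* ZMod (p ^ k) :=
    ZMod.castHom (pow_dvd_pow p (by omega : k ≤ l)) (ZMod (p ^ k))
  let Γ := (Matrix (Fin n) (Fin n) (ZMod (p ^ l)))ˣ
  let B := Fin n → Fin (p ^ l)
  let dir : B → Fin n → ZMod (p ^ l) := fun b i => (kkDir i0 b i : ZMod (p ^ l))
  let W : Γ → B → Fin n → ZMod (p ^ l) := fun g b => (g : Matrix (Fin n) (Fin n) (ZMod (p ^ l))).mulVec (dir b)
  let w : Γ → B → Fin n → ZMod (p ^ k) := fun g b i => cst (W g b i)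
  have hw : ∀ g b, w g b ∈ kkPrim (ZMod (p ^ k)) n := by
    intro g b
    rw [kk_mem_prim]
    let v := Matrix.vecMul (Pi.single i0 1) ((g⁻¹ : Γ) : Matrix (Fin n) (Fin n) (ZMod (p ^ l)))
    have hv : v ⬝ᵥ W g b = 1 := by
      simp only [v, W]
      rw [Matrix.dotProduct_mulVec, Matrix.vecMul_vecMul, Units.inv_mul, Matrix.vecMul_one]
      simp [dir, kkDir]
    refine ⟨fun i => cst (v i), ?_⟩
    have := congrArg cst hv
    simpa [dotProduct, map_sum, map_mul, map_one] using this
  refine ⟨Γ, B, inferInstance, inferInstance, inferInstance, kkLev p i0, w, hw, ?_, ?_, ?_⟩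
  · intro b h
    have hact : ∀ (g : Γ) (x : Fin n → ZMod (p ^ l)), (fun i => cst ((g : Matrix (Fin n) (Fin n) (ZMod (p ^ l))).mulVec x i))
        = ((g : Matrix (Fin n) (Fin n) (ZMod (p ^ l))).map cst).mulVec (fun i => cst (x i)) := by
      intro g x
      funext i
      exact RingHom.map_mulVec cst _ _ i
    have hfib : ∀ u1 ∈ kkPrim (ZMod (p ^ k)) n, ∀ u2 ∈ kkPrim (ZMod (p ^ k)) n,
        (Finset.univ.filter fun g => w g b = u1).card ≤ (Finset.univ.filter fun g => w g b = u2).card := by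
      intro u1 h1 u2 h2
      obtain ⟨g1, hg1⟩ := kk_trans p k l n hk i0 cst u1 ((kk_mem_prim _).1 h1)
      obtain ⟨g2, hg2⟩ := kk_trans p k l n hk i0 cst u2 ((kk_mem_prim _).1 h2)
      refine Finset.card_le_card_of_injOn (fun g => g2 * g1⁻¹ * g) ?_ ?_
      · intro g hg
        simp only [Finset.coe_filter, Finset.mem_univ, true_and, Set.mem_ofPred_eq] at hg ⊢
        have hinv : ((g1⁻¹ : Γ) : Matrix (Fin n) (Fin n) (ZMod (p ^ l))).mulVec
            ((g1 : Matrix (Fin n) (Fin n) (ZMod (p ^ l))).mulVec (Pi.single i0 1)) = Pi.single i0 1 := by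
          rw [Matrix.mulVec_mulVec, Units.inv_mul, Matrix.one_mulVec]
        simp only [w, W] at hg ⊢
        rw [Units.val_mul, Units.val_mul, ← Matrix.mulVec_mulVec, ← Matrix.mulVec_mulVec, hact, hact, hg, ← hg1, ← hact,
          hinv, ← hact, hg2]
      · intro a _ b _ h
        exact mul_left_cancel h
    have hsum : ∀ f : (Fin n → ZMod (p ^ k)) → ℝ, ∑ g, f (w g b) = ∑ u ∈ kkPrim (ZMod (p ^ k)) n,
        ((Finset.univ.filter fun g => w g b = u).card : ℝ) * f u := by
      intro f
      rw [← Finset.sum_fiberwise_of_maps_to (t := kkPrim (ZMod (p ^ k)) n) (g := fun g => w g b) (fun g _ => hw g b)]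
      refine Finset.sum_congr rfl fun u _ => ?_
      rw [Finset.sum_congr rfl (g := fun _ => f u), Finset.sum_const, nsmul_eq_mul]
      intro g hg
      rw [(Finset.mem_filter.1 hg).2]
    let u0 := w 1 b
    have hconst : ∀ u ∈ kkPrim (ZMod (p ^ k)) n, ((Finset.univ.filter fun g => w g b = u).card : ℝ) =
        (Finset.univ.filter fun g => w g b = u0).card := by
      intro u hu
      exact_mod_cast le_antisymm (hfib u hu u0 (hw 1 b)) (hfib u0 (hw 1 b) u hu)
    have hone := hsum (fun _ => 1)
    simp only [Finset.sum_const, Finset.card_univ, nsmul_eq_mul, mul_one] at hone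
    rw [Finset.sum_congr rfl hconst, Finset.sum_const, nsmul_eq_mul] at hone
    rw [hsum h, hone, Finset.mul_sum, Finset.mul_sum]
    refine Finset.sum_congr rfl fun u hu => ?_
    rw [hconst u hu]; ring
  · intro S g B' hB
    obtain ⟨O, F, _, _, _, _, π, ζ, hπ, hζ, hζ1⟩ := kk_ring p k
    have := kk_rank0 p k l n hkl O F π hπ ζ hζ hζ1 cst S B' (fun b => W g b) (fun b => kkLev p i0 b.1) ?_
      (fun b => hB b.1 b.2)
    · simpa using this
    · intro c hc
      have hlev : ∀ b ∈ B', kkLev p i0 b < p ^ l := by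
        intro b hb
        obtain ⟨a, T, hT, _⟩ := hB b hb
        refine lt_of_lt_of_le hT (le_trans (Nat.mul_le_mul_left n ?_) hkl)
        have := Finset.card_le_univ T
        rwa [ZMod.card] at this
      let c' : B → F := fun b => if hb : b ∈ B' then c ⟨b, hb⟩ else 0
      have hc' : c' = 0 := by
        refine kk_indep p F i0 c' fun v => ?_
        let x : Fin n → ZMod (p ^ l) := Matrix.vecMul (fun i => (v i : ZMod (p ^ l))) ((g⁻¹ : Γ) : Matrix (Fin n) (Fin n) (ZMod (p ^ l)))
        rw [← hc x, ← Finset.sum_subset (Finset.subset_univ B'), ← Finset.sum_coe_sort B']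
        · refine Finset.sum_congr rfl fun b _ => ?_
          congr 1
          · simp [c']
          · rw [kk_choose_mod p F l _ _ (hlev b.1 b.2), ← ZMod.val_natCast]
            congr 3
            rw [dotProduct_comm]
            simp only [x, W]
            rw [Matrix.dotProduct_mulVec, Matrix.vecMul_vecMul, Units.inv_mul, Matrix.vecMul_one]
            simp [dotProduct, dir, mul_comm]
        · intro b _ hb
          simp [c', hb]
      funext b
      have := congrFun hc' b.1
      simpa [c'] using this
  · intro s hs
    have hlpos : 0 < l := by omega
    let d := (n * s + (l - 1)) / l
    have hd : n * s ≤ l * d := by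
      have h1 := Nat.div_add_mod (n * s + (l - 1)) l
      have h2 := Nat.mod_lt (n * s + (l - 1)) hlpos
      simp only [d]; omega
    have hd2 : ∀ x, x < d → l * x < n * s := by
      intro x hx
      have : x + 1 ≤ d := hx
      have h1 := (Nat.le_div_iff_mul_le hlpos).1 this
      rw [add_mul, mul_comm x] at h1
      omega
    refine (kk_count n d s l hn (by omega) hd).trans ?_
    have hsmall : ∀ α ∈ kkA n d, ∀ i, α i < p ^ l := by
      intro α hα i
      rw [kk_mem_A] at hα
      have h1 := hd2 _ hα
      have h2 := Finset.single_le_sum (f := α) (fun _ _ => Nat.zero_le _) (Finset.mem_univ i)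
      have h3 : n * s ≤ n * p ^ k := Nat.mul_le_mul_left n hs
      have h4 := Nat.le_mul_of_pos_left (∑ i, α i) hlpos
      omega
    norm_cast
    refine Finset.card_le_card_of_injOn (fun α i => Fin.ofNat (p ^ l) (α i)) ?_ ?_
    · intro α hα
      have hα' : α ∈ kkA n d := hα
      simp only [Finset.coe_filter, Finset.mem_univ, true_and, Set.mem_ofPred_eq]
      refine lt_of_le_of_lt (kk_lev_le p (by omega) i0 _) ?_
      refine hd2 _ ?_
      rw [kk_mem_A] at hα'
      convert hα' using 2 with i
      exact Nat.mod_eq_of_lt (hsmall α hα i)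
    · intro α hα β hβ h
      funext i
      have := congrArg Fin.val (congrFun h i)
      simp only [Fin.val_ofNat] at this
      rwa [Nat.mod_eq_of_lt (hsmall α hα i), Nat.mod_eq_of_lt (hsmall β hβ i)] at this


/-- Kakeya bound with average of powers -/
def kkKB (R : Type) [CommRing R] [Fintype R] (n : ℕ) (C : ℝ) : Prop :=
  ∀ (S : Finset (Fin n → R)) (m : (Fin n → R) → ℕ),
    (∀ u ∈ kkPrim R n, ∃ a : Fin n → R, ∃ T : Finset R, m u ≤ T.card ∧ ∀ t ∈ T, a + t • u ∈ S) →
    C * ∑ u ∈ kkPrim R n, (m u : ℝ) ^ n ≤ (S.card : ℝ) * ((kkPrim R n).card : ℝ)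

/-- pairing -/
def kkPr {Q R : Type} {n : ℕ} (x : Fin n → Q) (y : Fin n → R) : Fin n → Q × R := fun i => (x i, y i)

theorem kk_prim_pr {Q R : Type} [CommRing Q] [CommRing R] [Fintype Q] [Fintype R] {n : ℕ}
    (x : Fin n → Q) (y : Fin n → R) :
    kkPr x y ∈ kkPrim (Q × R) n ↔ x ∈ kkPrim Q n ∧ y ∈ kkPrim R n := by
  simp only [kk_mem_prim]
  constructor
  · rintro ⟨v, hv⟩
    refine ⟨⟨fun i => (v i).1, ?_⟩, ⟨fun i => (v i).2, ?_⟩⟩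
    · have := congrArg Prod.fst hv
      simpa [Prod.fst_sum, kkPr] using this
    · have := congrArg Prod.snd hv
      simpa [Prod.snd_sum, kkPr] using this
  · rintro ⟨⟨v, hv⟩, ⟨v', hv'⟩⟩
    refine ⟨kkPr v v', ?_⟩
    refine Prod.ext ?_ ?_
    · simpa [Prod.fst_sum, kkPr] using hv
    · simpa [Prod.snd_sum, kkPr] using hv'

theorem kk_sum_pr {Q R : Type} [CommRing Q] [CommRing R] [Fintype Q] [Fintype R] {n : ℕ}
    (f : (Fin n → Q × R) → ℝ) :
    ∑ u ∈ kkPrim (Q × R) n, f u = ∑ x ∈ kkPrim Q n, ∑ y ∈ kkPrim R n, f (kkPr x y) := by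
  rw [← Finset.sum_product']
  refine Finset.sum_nbij' (fun u => (fun i => (u i).1, fun i => (u i).2)) (fun z => kkPr z.1 z.2) ?_ ?_ ?_ ?_ ?_
  · intro u hu
    rw [Finset.mem_product]
    exact (kk_prim_pr (fun i => (u i).1) (fun i => (u i).2)).1 hu
  · intro z hz
    rw [Finset.mem_product] at hz
    exact (kk_prim_pr _ _).2 hz
  · intro u _; rfl
  · intro z _; rfl
  · intro u _; rfl

theorem kk_step (p : ℕ) [hp : Fact p.Prime] (k n e : ℕ) (hk : 1 ≤ k) (hn : 1 ≤ n) (hne : n ≤ p ^ e)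
    [Fintype (ZMod (p ^ k))] (R : Type) [CommRing R] [Fintype R] (C lam : ℝ) (hC : 0 ≤ C) (hlam : 0 ≤ lam)
    (hf : ∀ f : R → ℕ, (∀ t, f t ≤ p ^ k) → ∃ s ≤ p ^ k,
      lam * (∑ t, f t : ℕ) ≤ (s : ℝ) * ((Finset.univ.filter fun t => s ≤ f t).card : ℝ))
    (hKB : kkKB R n C) :
    kkKB (ZMod (p ^ k) × R) n (C * (lam * (1 / (2 * ((k + e : ℕ) : ℝ)))) ^ n) := by
  classical
  obtain ⟨Γ, B, _, _, _, j, w, hw, h1, h2, h3⟩ := kk_pack p k n e hk hn hne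
  have : NeZero (p ^ k) := ⟨pow_ne_zero _ hp.out.ne_zero⟩
  intro S m hm
  set c : ℝ := 1 / (2 * ((k + e : ℕ) : ℝ)) with hc
  have hc0 : 0 ≤ c := by positivity
  have hdata : ∀ u : Fin n → ZMod (p ^ k) × R, ∃ (a : Fin n → ZMod (p ^ k) × R) (s : ℕ) (T' : Finset R),
      u ∈ kkPrim (ZMod (p ^ k) × R) n → (s ≤ p ^ k ∧ lam * m u ≤ (s : ℝ) * T'.card ∧
        ∀ t' ∈ T', ∃ T1 : Finset (ZMod (p ^ k)), s ≤ T1.card ∧ ∀ t ∈ T1, a + (t, t') • u ∈ S) := by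
    intro u
    by_cases hu : u ∈ kkPrim (ZMod (p ^ k) × R) n
    swap
    · exact ⟨0, 0, ∅, fun h => absurd h hu⟩
    obtain ⟨a, T, hT, hTS⟩ := hm u hu
    let T1 : R → Finset (ZMod (p ^ k)) := fun t' => Finset.univ.filter fun t => (t, t') ∈ T
    have hcard : ∑ t', (T1 t').card = T.card := by
      rw [Finset.card_eq_sum_card_fiberwise (f := Prod.snd) (t := Finset.univ) (by simp)]
      refine Finset.sum_congr rfl fun t' _ => ?_
      refine Finset.card_bij (fun t _ => (t, t')) ?_ ?_ ?_
      · intro t ht; simpa [T1] using ht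
      · intro t _ s _ h; exact (Prod.ext_iff.1 h).1
      · rintro ⟨x, y⟩ hx
        simp only [Finset.mem_filter] at hx
        obtain ⟨hx, rfl⟩ := hx
        exact ⟨x, by simpa [T1] using hx, rfl⟩
    obtain ⟨s, hs, hs2⟩ := hf (fun t' => (T1 t').card) (fun t' => by
      have := Finset.card_le_univ (T1 t')
      rwa [ZMod.card] at this)
    refine ⟨a, s, _, fun _ => ⟨hs, le_trans ?_ hs2, ?_⟩⟩
    · rw [hcard]
      exact mul_le_mul_of_nonneg_left (by exact_mod_cast hT) hlam
    · intro t' ht'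
      refine ⟨T1 t', (Finset.mem_filter.1 ht').2, fun t ht => hTS _ ?_⟩
      exact (Finset.mem_filter.1 ht).2
  choose a s T' hd using hdata
  let Sf : (Fin n → R) → Finset (Fin n → ZMod (p ^ k)) := fun x' => Finset.univ.filter fun x => kkPr x x' ∈ S
  have hSf : ∑ x', (Sf x').card = S.card := by
    rw [Finset.card_eq_sum_card_fiberwise (f := fun x i => (x i).2) (t := Finset.univ) (by simp)]
    refine Finset.sum_congr rfl fun x' _ => ?_
    refine Finset.card_bij (fun x _ => kkPr x x') ?_ ?_ ?_
    · intro t ht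
      simp only [Sf, Finset.mem_filter, Finset.mem_univ, true_and] at ht ⊢
      exact ⟨ht, rfl⟩
    · intro t _ s _ h
      funext i
      exact (Prod.ext_iff.1 (congrFun h i)).1
    · intro x hx
      simp only [Finset.mem_filter] at hx
      obtain ⟨hx, rfl⟩ := hx
      exact ⟨fun i => (x i).1, Finset.mem_filter.2 ⟨Finset.mem_univ _, hx⟩, rfl⟩
  let X : Γ → B → Finset (Fin n → R) := fun g b => Finset.univ.filter fun x' =>
    ∃ a : Fin n → ZMod (p ^ k), ∃ T : Finset (ZMod (p ^ k)), j b < n * T.card ∧ ∀ t ∈ T, a + t • w g b ∈ Sf x'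
  have hX : ∀ g, ∑ b, (X g b).card ≤ (kkA n n).card * S.card := by
    intro g
    have e1 : ∑ b, (X g b).card = ∑ x', (Finset.univ.filter fun b => x' ∈ X g b).card := by
      have := Finset.sum_card_bipartiteAbove_eq_sum_card_bipartiteBelow (s := (Finset.univ : Finset B))
        (t := (Finset.univ : Finset (Fin n → R))) (fun b x' => x' ∈ X g b)
      simpa [Finset.bipartiteAbove, Finset.bipartiteBelow] using this
    rw [e1, ← hSf, Finset.mul_sum]
    refine Finset.sum_le_sum fun x' _ => ?_
    refine h2 (Sf x') g _ fun b hb => ?_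
    have := (Finset.mem_filter.1 hb).2
    exact (Finset.mem_filter.1 this).2
  -- weights
  let ω : B → (Fin n → ZMod (p ^ k)) → ℝ := fun b x => ∑ y ∈ kkPrim R n,
    if j b < n * s (kkPr x y) then ((T' (kkPr x y)).card : ℝ) ^ n else 0
  have hXl : ∀ g b, C * ω b (w g b) ≤ ((X g b).card : ℝ) * ((kkPrim R n).card : ℝ) := by
    intro g b
    have := hKB (X g b) (fun y => if j b < n * s (kkPr (w g b) y) then (T' (kkPr (w g b) y)).card else 0) ?_
    · refine le_trans (le_of_eq ?_) this
      congr 1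
      refine Finset.sum_congr rfl fun y _ => ?_
      split_ifs
      · rfl
      · simp [show n ≠ 0 by omega]
    · intro y hy
      by_cases hj : j b < n * s (kkPr (w g b) y)
      swap
      · exact ⟨0, ∅, by simp [hj], by simp⟩
      obtain ⟨_, _, hd3⟩ := hd (kkPr (w g b) y) ((kk_prim_pr _ _).2 ⟨hw g b, hy⟩)
      refine ⟨fun i => (a (kkPr (w g b) y) i).2, T' (kkPr (w g b) y), by simp [hj], fun t' ht' => ?_⟩
      obtain ⟨T1, hT1, hT1S⟩ := hd3 t' ht'
      refine Finset.mem_filter.2 ⟨Finset.mem_univ _, fun i => (a (kkPr (w g b) y) i).1, T1,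
        lt_of_lt_of_le hj (Nat.mul_le_mul_left n hT1), fun t ht => ?_⟩
      refine Finset.mem_filter.2 ⟨Finset.mem_univ _, ?_⟩
      exact hT1S t ht
  have hK : (0 : ℝ) < (kkA n n).card := by
    have : (0 : Fin n → ℕ) ∈ kkA n n := by rw [kk_mem_A]; simp; omega
    exact_mod_cast Finset.card_pos.2 ⟨_, this⟩
  have hΓ : (0 : ℝ) < Fintype.card Γ := by exact_mod_cast Fintype.card_pos
  -- upper
  have hup : C * ∑ b, ∑ g, ω b (w g b) ≤
      (Fintype.card Γ : ℝ) * ((kkA n n).card * S.card) * ((kkPrim R n).card : ℝ) := by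
    rw [Finset.sum_comm, Finset.mul_sum]
    calc ∑ g, C * ∑ b, ω b (w g b) ≤ ∑ g : Γ, ((kkA n n).card * S.card : ℝ) * ((kkPrim R n).card : ℝ) := by
          refine Finset.sum_le_sum fun g _ => ?_
          rw [Finset.mul_sum]
          refine (Finset.sum_le_sum fun b _ => hXl g b).trans ?_
          rw [← Finset.sum_mul]
          refine mul_le_mul_of_nonneg_right ?_ (by positivity)
          exact_mod_cast hX g
      _ = _ := by rw [Finset.sum_const, Finset.card_univ, nsmul_eq_mul]; ring
  have hlow : ((kkPrim (ZMod (p ^ k)) n).card : ℝ) * ∑ b, ∑ g, ω b (w g b) =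
      (Fintype.card Γ : ℝ) * ∑ u ∈ kkPrim (ZMod (p ^ k) × R) n,
        ((Finset.univ.filter fun b => j b < n * s u).card : ℝ) * ((T' u).card : ℝ) ^ n := by
    rw [Finset.mul_sum, Finset.sum_congr rfl fun b _ => h1 b (ω b), ← Finset.mul_sum, Finset.sum_comm, kk_sum_pr]
    congr 1
    refine Finset.sum_congr rfl fun x _ => ?_
    rw [Finset.sum_comm]
    refine Finset.sum_congr rfl fun y _ => ?_
    rw [← Finset.sum_filter, Finset.sum_const, nsmul_eq_mul]
  have hterm : ∀ u ∈ kkPrim (ZMod (p ^ k) × R) n, ((kkA n n).card : ℝ) * ((lam * c) ^ n * (m u : ℝ) ^ n) ≤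
      ((Finset.univ.filter fun b => j b < n * s u).card : ℝ) * ((T' u).card : ℝ) ^ n := by
    intro u hu
    obtain ⟨d1, d2, _⟩ := hd u hu
    refine le_trans ?_ (mul_le_mul_of_nonneg_right (h3 _ d1) (by positivity))
    rw [mul_assoc, ← mul_pow, ← mul_pow]
    refine mul_le_mul_of_nonneg_left (pow_le_pow_left₀ (by positivity) ?_ _) hK.le
    have := mul_le_mul_of_nonneg_right d2 hc0
    calc lam * c * m u = lam * m u * c := by ring
      _ ≤ _ := this
      _ = _ := by ring
  have hprim : ((kkPrim (ZMod (p ^ k) × R) n).card : ℝ) =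
      ((kkPrim (ZMod (p ^ k)) n).card : ℝ) * ((kkPrim R n).card : ℝ) := by
    have := kk_sum_pr (Q := ZMod (p ^ k)) (R := R) (n := n) (fun _ => 1)
    simpa using this
  have hfin := mul_le_mul_of_nonneg_left hup (Nat.cast_nonneg (α := ℝ) (kkPrim (ZMod (p ^ k)) n).card)
  rw [mul_left_comm, hlow] at hfin
  have hS2 := Finset.sum_le_sum hterm
  rw [← Finset.mul_sum, ← Finset.mul_sum] at hS2
  have hS3 := mul_le_mul_of_nonneg_left (mul_le_mul_of_nonneg_left hS2 hΓ.le) hC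
  have hS4 := hS3.trans hfin
  rw [hprim]
  refine le_of_mul_le_mul_left ?_ (mul_pos hΓ hK)
  calc _ = C * ((Fintype.card Γ : ℝ) * ((kkA n n).card * ((lam * c) ^ n * ∑ u ∈ kkPrim (ZMod (p ^ k) × R) n, (m u : ℝ) ^ n))) := by ring
    _ ≤ _ := hS4
    _ = _ := by ring

theorem kk_equiv {R R' : Type} [CommRing R] [CommRing R'] [Fintype R] [Fintype R'] (e : R ≃+* R') (n : ℕ) (C : ℝ)
    (h : kkKB R n C) : kkKB R' n C := by
  classical
  intro S m hm
  let φ : (Fin n → R) ≃ (Fin n → R') := Equiv.piCongrRight fun _ => e.toEquiv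
  have hφ : ∀ u i, φ u i = e (u i) := fun _ _ => rfl
  have hpr : ∀ u, φ u ∈ kkPrim R' n ↔ u ∈ kkPrim R n := by
    intro u
    simp only [kk_mem_prim]
    constructor
    · rintro ⟨v, hv⟩
      refine ⟨fun i => e.symm (v i), e.injective ?_⟩
      simpa [map_sum, hφ] using hv
    · rintro ⟨v, hv⟩
      refine ⟨fun i => e (v i), ?_⟩
      have := congrArg e hv
      simpa [map_sum, hφ] using this
  have hmap : kkPrim R' n = (kkPrim R n).map φ.toEmbedding := by
    ext u
    rw [Finset.mem_map_equiv, ← hpr, Equiv.apply_symm_apply]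
  have := h (S.map φ.symm.toEmbedding) (fun u => m (φ u)) ?_
  · rw [hmap, Finset.sum_map, Finset.card_map]
    rw [Finset.card_map] at this
    exact this
  · intro u hu
    obtain ⟨a, T, hT, hTS⟩ := hm (φ u) ((hpr u).2 hu)
    refine ⟨φ.symm a, T.map e.symm.toEquiv.toEmbedding, by simpa using hT, ?_⟩
    intro t ht
    rw [Finset.mem_map_equiv] at ht
    have h1 := hTS _ ht
    rw [Finset.mem_map_equiv]
    convert h1 using 1
    funext i
    show e (φ.symm a i + t * u i) = a i + e t * φ u i
    rw [map_add, map_mul, hφ, ← hφ, Equiv.apply_symm_apply]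

theorem kk_base (R : Type) [CommRing R] [Fintype R] [Subsingleton R] (n : ℕ) (hn : 1 ≤ n) : kkKB R n 1 := by
  intro S m hm
  rw [one_mul, mul_comm, ← nsmul_eq_mul, ← Finset.sum_const]
  refine Finset.sum_le_sum fun u hu => ?_
  obtain ⟨a, T, hT, hTS⟩ := hm u hu
  have hT1 : T.card ≤ 1 := Finset.card_le_one_of_subsingleton T
  have hm1 : m u ≤ 1 := hT.trans hT1
  have : m u ≤ S.card := by
    rcases T.eq_empty_or_nonempty with rfl | ⟨t, ht⟩
    · simp at hT; omega
    · have : 1 ≤ S.card := Finset.card_pos.2 ⟨_, hTS t ht⟩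
      omega
  refine le_trans ?_ (by exact_mod_cast this : (m u : ℝ) ≤ S.card)
  exact pow_le_of_le_one (by positivity) (by exact_mod_cast hm1) (by omega)

theorem kk_harm (R : Type) [Fintype R] (q : ℕ) (hq : 1 ≤ q) (f : R → ℕ) (hf : ∀ t, f t ≤ q) :
    ∃ s ≤ q, (1 / (Real.log q + 1)) * (∑ t, f t : ℕ) ≤
      (s : ℝ) * ((Finset.univ.filter fun t => s ≤ f t).card : ℝ) := by
  classical
  by_contra! h
  have hlog : 0 ≤ Real.log q := Real.log_nonneg (by exact_mod_cast hq)
  have hsum : ∑ t, f t = ∑ s ∈ Finset.Icc 1 q, (Finset.univ.filter fun t => s ≤ f t).card := by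
    have := Finset.sum_card_bipartiteAbove_eq_sum_card_bipartiteBelow (s := (Finset.univ : Finset R))
        (t := Finset.Icc 1 q) (fun t s => s ≤ f t)
    refine Eq.trans ?_ this
    refine Finset.sum_congr rfl fun t _ => ?_
    have : Finset.bipartiteAbove (fun t s => s ≤ f t) (Finset.Icc 1 q) t = Finset.Icc 1 (f t) := by
      ext s
      simp only [Finset.bipartiteAbove, Finset.mem_filter, Finset.mem_Icc]
      have := hf t
      omega
    rw [this]; simp
  set M : ℝ := ((∑ t, f t : ℕ) : ℝ) with hM
  have hlt : M < ∑ s ∈ Finset.Icc 1 q, (1 / (Real.log q + 1)) * M * ((s : ℝ)⁻¹) := by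
    conv_lhs => rw [hM, hsum]
    push_cast
    refine Finset.sum_lt_sum_of_nonempty ⟨1, by simp [hq]⟩ fun s hs => ?_
    have hs' := Finset.mem_Icc.1 hs
    have hs0 : (0 : ℝ) < s := by exact_mod_cast hs'.1
    have := h s hs'.2
    rw [← div_eq_mul_inv, lt_div_iff₀ hs0]
    linarith
  rw [← Finset.mul_sum] at hlt
  have hh := harmonic_le_one_add_log q
  rw [harmonic_eq_sum_Icc] at hh
  push_cast at hh
  have hM0 : 0 ≤ M := by positivity
  have : 1 / (Real.log q + 1) * M * ∑ s ∈ Finset.Icc 1 q, ((s : ℝ)⁻¹) ≤ 1 / (Real.log q + 1) * M * (1 + Real.log q) :=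
    mul_le_mul_of_nonneg_left hh (by positivity)
  have h3 : 1 / (Real.log q + 1) * M * (1 + Real.log q) = M := by field_simp; ring
  linarith

theorem kk_main (n r : ℕ) (hn : 1 ≤ n) (p k e : Fin r → ℕ) (hp : ∀ i, (p i).Prime)
    (hinj : Function.Injective p) (hk : ∀ i, 1 ≤ k i) (he : ∀ i, n ≤ p i ^ e i) (z : Fin r)
    (s : Finset (Fin r)) (hs : z ∉ s) : ∀ (N : ℕ) [Fintype (ZMod N)], N = p z ^ k z * ∏ i ∈ s, p i ^ k i →
      kkKB (ZMod N) n (((∏ i ∈ s, 1 / ((k i : ℝ) * Real.log (p i) + 1)) *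
        ((1 / (2 * ((k z + e z : ℕ) : ℝ))) * ∏ i ∈ s, 1 / (2 * ((k i + e i : ℕ) : ℝ)))) ^ n) := by
  classical
  have hfin : ∀ i, NeZero (p i ^ k i) := fun i => ⟨pow_ne_zero _ (hp i).ne_zero⟩
  induction s using Finset.induction_on with
  | empty =>
    intro N _ hN
    have := Fact.mk (hp z)
    have := hfin z
    have hco : (p z ^ k z).Coprime 1 := Nat.coprime_one_right _
    have hst := kk_step (p z) (k z) n (e z) (hk z) hn (he z) (ZMod 1) 1 1 zero_le_one zero_le_one ?_
      (kk_base (ZMod 1) n hn)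
    · have hN' : N = p z ^ k z * 1 := by simpa using hN
      subst hN'
      have := kk_equiv (ZMod.chineseRemainder hco).symm n _ hst
      simpa using this
    · intro f hf
      refine ⟨f 0, hf 0, ?_⟩
      have : (Finset.univ.filter fun t : ZMod 1 => f 0 ≤ f t) = Finset.univ := by
        ext t; simp [Subsingleton.elim t 0]
      rw [this]
      simp
      exact le_of_eq (congrArg f (Subsingleton.elim _ _))
  | insert i s hi ih =>
    intro N _ hN
    have hzs : z ∉ s := fun h => hs (Finset.mem_insert_of_mem h)
    have hzi : z ≠ i := fun h => hs (h ▸ Finset.mem_insert_self _ _)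
    have := Fact.mk (hp i)
    have := hfin i
    set N' := p z ^ k z * ∏ i ∈ s, p i ^ k i with hN'
    have hN0 : NeZero N' := ⟨mul_ne_zero (pow_ne_zero _ (hp z).ne_zero)
      (Finset.prod_ne_zero_iff.2 fun i _ => pow_ne_zero _ (hp i).ne_zero)⟩
    have hcop : ∀ i' , i ≠ i' → (p i ^ k i).Coprime (p i' ^ k i') := fun i' h =>
      Nat.Coprime.pow _ _ ((Nat.coprime_primes (hp i) (hp i')).2 fun h' => h (hinj h'))
    have hco : (p i ^ k i).Coprime N' := by
      rw [hN']
      refine Nat.Coprime.mul_right (hcop z hzi.symm) (Nat.Coprime.prod_right fun i' hi' => hcop i' ?_)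
      rintro rfl; exact hi hi'
    have hlog : 0 ≤ Real.log (p i) := Real.log_natCast_nonneg _
    have hst := kk_step (p i) (k i) n (e i) (hk i) hn (he i) (ZMod N') _ (1 / ((k i : ℝ) * Real.log (p i) + 1))
      ?_ (by positivity) ?_ (ih hzs N' rfl)
    · have hNN : N = p i ^ k i * N' := by
        rw [hN, Finset.prod_insert hi, hN']; ring
      subst hNN
      have := kk_equiv (ZMod.chineseRemainder hco).symm n _ hst
      convert this using 1
      rw [Finset.prod_insert hi, Finset.prod_insert hi, ← mul_pow]
      ring
    · refine pow_nonneg (mul_nonneg (Finset.prod_nonneg fun i _ => ?_) (by positivity)) _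
      have : 0 ≤ Real.log (p i) := Real.log_natCast_nonneg _
      positivity
    · intro f hf
      have := kk_harm (ZMod N') (p i ^ k i) (Nat.pos_of_ne_zero (hfin i).out) f hf
      rw [Nat.cast_pow, Real.log_pow] at this
      exact this

end

theorem kk_line_card {N n : ℕ} [NeZero N] (a u : Fin n → ZMod N) (S : Finset (Fin n → ZMod N)) :
    ∃ T : Finset (ZMod N), ((lineF a u) ∩ S).card ≤ T.card ∧ ∀ t ∈ T, a + t • u ∈ S := by
  classical
  refine ⟨Finset.univ.filter fun t => a + t • u ∈ S, ?_, by simp⟩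
  refine le_trans (Finset.card_le_card ?_) (Finset.card_image_le (f := fun t : ZMod N => a + t • u))
  intro x hx
  rw [Finset.mem_inter, lineF, Finset.mem_image] at hx
  obtain ⟨⟨t, _, rfl⟩, h2⟩ := hx
  exact Finset.mem_image.2 ⟨t, Finset.mem_filter.2 ⟨Finset.mem_univ _, h2⟩, rfl⟩

theorem kk_line_smul {N n : ℕ} [NeZero N] (a u : Fin n → ZMod N) (c : (ZMod N)ˣ) :
    lineF a ((c : ZMod N) • u) = lineF a u := by
  ext x
  simp only [lineF, Finset.mem_image, Finset.mem_univ, true_and]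
  constructor
  · rintro ⟨t, rfl⟩
    exact ⟨t * c, by rw [mul_smul]⟩
  · rintro ⟨t, rfl⟩
    exact ⟨t * (c⁻¹ : (ZMod N)ˣ), by rw [smul_smul, mul_assoc, Units.inv_mul, mul_one]⟩

theorem kk_sum_proj {N n : ℕ} [NeZero N] (P : Finset (Fin n → ZMod N)) (hP : IsProjRepSet N n P)
    (f : (Fin n → ZMod N) → ℝ) (hf : ∀ (c : (ZMod N)ˣ) u, f ((c : ZMod N) • u) = f u) :
    ∑ u ∈ kkPrim (ZMod N) n, f u = (Fintype.card (ZMod N)ˣ : ℝ) * ∑ u ∈ P, f u := by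
  classical
  have h : ∑ x ∈ (Finset.univ : Finset (ZMod N)ˣ) ×ˢ P, f x.2 = ∑ u ∈ kkPrim (ZMod N) n, f u := by
    refine Finset.sum_bij (fun x _ => ((x.1 : ZMod N)) • x.2) ?_ ?_ ?_ ?_
    · rintro ⟨c, w⟩ hx
      have hw := (Finset.mem_product.1 hx).2
      obtain ⟨v, hv⟩ := hP.1 w hw
      rw [kk_mem_prim]
      refine ⟨fun i => v i * (c⁻¹ : (ZMod N)ˣ), ?_⟩
      rw [← hv]
      refine Finset.sum_congr rfl fun i _ => ?_
      simp only [Pi.smul_apply, smul_eq_mul]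
      rw [mul_assoc, ← mul_assoc ((c⁻¹ : (ZMod N)ˣ) : ZMod N), Units.inv_mul, one_mul]
    · rintro ⟨c, w⟩ hx ⟨c', w'⟩ hx' heq
      have hw := (Finset.mem_product.1 hx).2
      have hw' := (Finset.mem_product.1 hx').2
      simp only at heq hw hw'
      have hww : w = w' := by
        refine (hP.2 w (hP.1 w hw)).unique ⟨hw, 1, by simp⟩ ⟨hw', c⁻¹ * c', ?_⟩
        rw [Units.val_mul, mul_smul, ← heq, smul_smul, Units.inv_mul, one_smul]
      subst hww
      obtain ⟨v, hv⟩ := hP.1 w hw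
      have hcc : ∀ d : ZMod N, ∑ i, v i * ((d • w) i) = d := by
        intro d
        have h1 : ∑ i, v i * ((d • w) i) = d * ∑ i, v i * w i := by
          rw [Finset.mul_sum]
          refine Finset.sum_congr rfl fun i _ => ?_
          simp only [Pi.smul_apply, smul_eq_mul]; ring
        rw [h1, hv, mul_one]
      have : (c : ZMod N) = c' := by
        rw [← hcc c, heq, hcc c']
      rw [Units.ext this]
    · intro u hu
      rw [kk_mem_prim] at hu
      obtain ⟨w, ⟨hw, c, hc⟩, _⟩ := hP.2 u hu
      exact ⟨(c, w), Finset.mem_product.2 ⟨Finset.mem_univ _, hw⟩, hc.symm⟩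
    · rintro ⟨c, w⟩ _
      exact (hf c w).symm
  rw [← h, Finset.sum_product]
  simp

theorem stmt1 (n r : ℕ) (hn : 1 ≤ n) (hr : 1 ≤ r)
    (p k : Fin r → ℕ) (hp : ∀ i, (p i).Prime)
    (hord : ∀ i j : Fin r, i < j → p j < p i)
    (hk : ∀ i, 1 ≤ k i) (N : ℕ) [NeZero N] (hN : N = ∏ i, p i ^ k i)
    (P : Finset (Fin n → ZMod N)) (hP : IsProjRepSet N n P)
    (m : ℕ) (ε : ℝ) (hε0 : 0 ≤ ε) (hε1 : ε ≤ 1)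
    (S : Finset (Fin n → ZMod N))
    (hS : ε * (P.card : ℝ) ≤
      ((P.filter fun u => ∃ a : Fin n → ZMod N, m ≤ ((lineF a u) ∩ S).card).card : ℝ)) :
    (S.card : ℝ) ≥
      ((∏ j ∈ Finset.univ.filter (fun j : Fin r => (j : ℕ) < r - 1),
          1 / ((k j : ℝ) * Real.log (p j) + 1)) *
        ∏ i : Fin r, 1 / (2 * ((k i : ℝ) + ((⌈Real.log n / Real.log (p i)⌉ : ℤ) : ℝ)))) ^ n *
      ε * (m : ℝ) ^ n := by
  classical
  set e : Fin r → ℕ := fun i => ⌈Real.log n / Real.log (p i)⌉.toNat with hedef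
  have hlogp : ∀ i, 0 < Real.log (p i) := fun i => Real.log_pos (by exact_mod_cast (hp i).one_lt)
  have hlogn : 0 ≤ Real.log n := Real.log_natCast_nonneg _
  have hce : ∀ i, ((⌈Real.log n / Real.log (p i)⌉ : ℤ) : ℝ) = (e i : ℝ) := by
    intro i
    have h0 : 0 ≤ ⌈Real.log n / Real.log (p i)⌉ := Int.ceil_nonneg (div_nonneg hlogn (hlogp i).le)
    have h1 : ((e i : ℕ) : ℤ) = ⌈Real.log n / Real.log (p i)⌉ := Int.toNat_of_nonneg h0
    rw [← h1, Int.cast_natCast]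
  have he : ∀ i, n ≤ p i ^ e i := by
    intro i
    have h1 : Real.log n / Real.log (p i) ≤ (e i : ℝ) := by
      rw [← hce i]; exact Int.le_ceil _
    rw [div_le_iff₀ (hlogp i), ← Real.log_pow] at h1
    have hp0 : (0 : ℝ) < (p i : ℝ) ^ e i := pow_pos (by exact_mod_cast (hp i).pos) _
    have hn0 : (0 : ℝ) < n := by exact_mod_cast hn
    exact_mod_cast (Real.log_le_log_iff hn0 hp0).1 h1
  have hinj : Function.Injective p := by
    intro i j hij
    rcases lt_trichotomy i j with h | h | h
    · have := hord i j h; omega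
    · exact h
    · have := hord j i h; omega
  set z : Fin r := ⟨r - 1, by omega⟩ with hz
  set s : Finset (Fin r) := Finset.univ.filter (fun j : Fin r => (j : ℕ) < r - 1) with hsdef
  have hzs : z ∉ s := by simp [hsdef, hz]
  have huniv : (Finset.univ : Finset (Fin r)) = insert z s := by
    ext j
    simp only [hsdef, hz, Finset.mem_univ, Finset.mem_insert, Finset.mem_filter, true_and, true_iff,
      Fin.ext_iff]
    omega
  have hmain := kk_main n r hn p k e hp hinj hk he z s hzs N
    (by rw [hN, huniv, Finset.prod_insert hzs])
  have hC : ((∏ j ∈ s, 1 / ((k j : ℝ) * Real.log (p j) + 1)) *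
        ∏ i : Fin r, 1 / (2 * ((k i : ℝ) + ((⌈Real.log n / Real.log (p i)⌉ : ℤ) : ℝ)))) =
      (∏ i ∈ s, 1 / ((k i : ℝ) * Real.log (p i) + 1)) *
        ((1 / (2 * ((k z + e z : ℕ) : ℝ))) * ∏ i ∈ s, 1 / (2 * ((k i + e i : ℕ) : ℝ))) := by
    rw [huniv, Finset.prod_insert hzs]
    simp only [hce, Nat.cast_add]
  rw [hC]
  set C : ℝ := ((∏ i ∈ s, 1 / ((k i : ℝ) * Real.log (p i) + 1)) *
        ((1 / (2 * ((k z + e z : ℕ) : ℝ))) * ∏ i ∈ s, 1 / (2 * ((k i + e i : ℕ) : ℝ)))) ^ n with hCdef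
  have hC0 : 0 ≤ C := by
    refine pow_nonneg (mul_nonneg (Finset.prod_nonneg fun i _ => ?_) (by positivity)) _
    have := (hlogp i).le
    positivity
  set F : (Fin n → ZMod N) → ℕ := fun u =>
    if ∃ a : Fin n → ZMod N, m ≤ ((lineF a u) ∩ S).card then m else 0 with hF
  have hb := hmain S F (by
    intro u _
    by_cases h : ∃ a : Fin n → ZMod N, m ≤ ((lineF a u) ∩ S).card
    · obtain ⟨a, ha⟩ := h
      obtain ⟨T, h1, h2⟩ := kk_line_card a u S
      refine ⟨a, T, ?_, h2⟩
      have : F u ≤ m := by simp only [hF]; split_ifs <;> omega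
      omega
    · refine ⟨0, ∅, ?_, by simp⟩
      simp only [hF, if_neg h]; simp)
  have hs1 := kk_sum_proj P hP (fun u => (F u : ℝ) ^ n) (by
    intro c u
    simp only [hF, kk_line_smul])
  have hs2 := kk_sum_proj P hP (fun _ => 1) (by simp)
  rw [Finset.sum_const, Finset.sum_const, nsmul_eq_mul, nsmul_eq_mul, mul_one, mul_one] at hs2
  rw [hs1, hs2] at hb
  have hs3 : ∑ u ∈ P, (F u : ℝ) ^ n =
      ((P.filter fun u => ∃ a : Fin n → ZMod N, m ≤ ((lineF a u) ∩ S).card).card : ℝ) * (m : ℝ) ^ n := by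
    rw [← nsmul_eq_mul, ← Finset.sum_const, Finset.sum_filter]
    refine Finset.sum_congr rfl fun u _ => ?_
    simp only [hF]
    split_ifs
    · rfl
    · simp; omega
  rw [hs3] at hb
  have hPpos : 0 < (P.card : ℝ) := by
    have : IsPrimitiveVec (N := N) (n := n) (fun _ => 1) := by
      refine ⟨Pi.single ⟨0, by omega⟩ 1, ?_⟩
      simp
    obtain ⟨w, ⟨hw, _⟩, _⟩ := hP.2 _ this
    exact_mod_cast Finset.card_pos.2 ⟨w, hw⟩
  have hU : 0 < (Fintype.card (ZMod N)ˣ : ℝ) := by exact_mod_cast Fintype.card_pos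
  have hm0 : (0 : ℝ) ≤ (m : ℝ) ^ n := by positivity
  have h1 : C * (ε * (P.card : ℝ) * (m : ℝ) ^ n) ≤ (S.card : ℝ) * P.card := by
    refine le_trans (mul_le_mul_of_nonneg_left (mul_le_mul_of_nonneg_right hS hm0) hC0) ?_
    refine le_of_mul_le_mul_left ?_ hU
    linarith
  refine le_of_mul_le_mul_right ?_ hPpos
  linarith
end
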